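/- arXiv:math/0511337 — 15 statements merged into one kernel-verified Lean document; each statement's English description precedes it below -/
import Mathlib

section
/- Let A be a unital star ring, q ≥ 1, and let U be a q×q matrix with entries in A such that U·U* = U*·U = C·1 for some element C of A (where U* denotes the conjugate-transpose matrix and 1 the identity matrix). Then C commutes with every matrix entry U_{ij} of U and with every adjoint entry (U_{ij})*. -/
theorem commute_aux {A : Type*} [Ring A] {q : ℕ}
    (X Y : Matrix (Fin q) (Fin q) A) (C : A)
    (h1 : X * Y = C • (1 : Matrix (Fin q) (Fin q) A))
    (h2 : Y * X = C • (1 : Matrix (Fin q) (Fin q) A)) (i j : Fin q) :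
    Commute C (X i j) := by
  have h := mul_assoc X Y X
  rw [h1, h2] at h
  have h' := congrFun (congrFun h i) j
  simpa [commute_iff_eq, Matrix.mul_apply, Matrix.one_apply] using h'


/-- If `U U* = U* U = C • 1` in `M_q(A)` for a unital star ring `A`, then `C`
commutes with every entry of `U` and with every adjoint of an entry of `U`. -/
theorem stmt_0 {A : Type*} [Ring A] [StarRing A] (q : ℕ) (hq : 1 ≤ q)
    (U : Matrix (Fin q) (Fin q) A) (C : A)
    (h1 : U * U.conjTranspose = C • (1 : Matrix (Fin q) (Fin q) A))
    (h2 : U.conjTranspose * U = C • (1 : Matrix (Fin q) (Fin q) A)) :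
    ∀ i j : Fin q, Commute C (U i j) ∧ Commute C (star (U i j)) := by
  intro i j
  exact ⟨commute_aux U _ C h1 h2 i j, commute_aux U.conjTranspose _ C h2 h1 j i⟩
end

section
/- Let A be a unital star algebra over ℂ, n ≥ 1, and z : Fin n → A. Then the equality Σ_μ (z_μ ⊗ (z_μ)* − (z_μ)* ⊗ z_μ) = 0 holds in the tensor product A ⊗_ℂ A if and only if there exists a matrix Λ ∈ M_n(ℂ) which is unitary (Λ*Λ = 1) and symmetric (Λᵀ = Λ) such that (z_μ)* = Σ_ν Λ_{μν} · z_ν for every μ. -/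
open scoped TensorProduct

lemma aux_linalg (n : ℕ) (W : Submodule ℝ (EuclideanSpace ℂ (Fin n)))
    (hW : ∀ x ∈ W, ∀ y ∈ W, (inner ℂ x y : ℂ).im = 0) :
    ∃ Λ : Matrix (Fin n) (Fin n) ℂ,
        Λ.conjTranspose * Λ = 1 ∧ Λ.transpose = Λ ∧
          ∀ x ∈ W, ∀ μ, star (x μ) = ∑ ν, Λ μ ν * x ν := by
  classical
  let w := stdOrthonormalBasis ℝ W
  have hw : Orthonormal ℂ (fun i => (w i : EuclideanSpace ℂ (Fin n))) := by
    rw [orthonormal_iff_ite]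
    intro i j
    have h1 := (orthonormal_iff_ite.1 w.orthonormal) i j
    have h2 := hW _ (w i).2 _ (w j).2
    have h3 : (inner ℂ (w i : EuclideanSpace ℂ (Fin n)) (w j)).re = if i = j then 1 else 0 := by
      rw [← h1, Submodule.coe_inner, PiLp.inner_apply, PiLp.inner_apply, Complex.re_sum]
      rfl
    apply Complex.ext
    · rw [h3]; split_ifs <;> simp
    · rw [h2]; split_ifs <;> simp
  obtain ⟨u, b, hub, hb⟩ := hw.toSubtypeRange.exists_orthonormalBasis_extension
  have hcard : Fintype.card u = Fintype.card (Fin n) := by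
    rw [← Module.finrank_eq_card_basis b.toBasis]; simp
  let c := b.reindex (Fintype.equivOfCardEq hcard)
  have hc : ∀ j, ∃ i, c i = w j := by
    intro j
    have : (w j : EuclideanSpace ℂ (Fin n)) ∈ u := hub ⟨j, rfl⟩
    refine ⟨Fintype.equivOfCardEq hcard ⟨_, this⟩, ?_⟩
    simp [c, hb]
  let V : Matrix (Fin n) (Fin n) ℂ := fun i μ => star (c i μ)
  have hVa : ∀ i μ, V i μ = star (c i μ) := fun _ _ => rfl
  have hV : V * V.conjTranspose = 1 := by
    ext i j
    have := (orthonormal_iff_ite.1 c.orthonormal) i j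
    simp only [PiLp.inner_apply, RCLike.inner_apply] at this
    simp only [Matrix.mul_apply, Matrix.conjTranspose_apply, hVa, star_star, Matrix.one_apply]
    rw [← this]
    exact Finset.sum_congr rfl fun _ _ => mul_comm _ _
  have hV' : V.conjTranspose * V = 1 := mul_eq_one_comm.1 hV
  have hVt : V.transpose.conjTranspose * V.transpose = 1 := by
    rw [← Matrix.transpose_one, ← hV, Matrix.transpose_mul]; rfl
  refine ⟨V.transpose * V, ?_, ?_, ?_⟩
  · rw [Matrix.conjTranspose_mul, Matrix.mul_assoc, ← Matrix.mul_assoc _ V.transpose V, hVt,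
      Matrix.one_mul, hV']
  · simp [Matrix.transpose_mul]
  · have key : ∀ i μ, star (c i μ) = ∑ ν, (V.transpose * V) μ ν * c i ν := by
      intro i μ
      have h : (V.transpose * V * V.conjTranspose) μ i = V.transpose μ i := by
        rw [Matrix.mul_assoc, hV, Matrix.mul_one]
      rw [Matrix.mul_apply] at h
      simp only [Matrix.conjTranspose_apply, Matrix.transpose_apply, hVa, star_star] at h
      exact h.symm
    intro x hx μ
    have hs := congrArg (Subtype.val) (w.sum_repr ⟨x, hx⟩)
    simp only [AddSubmonoidClass.coe_finsetSum, SetLike.val_smul] at hs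
    have hx' : ∀ μ, x μ = ∑ j, ((w.repr ⟨x, hx⟩ j : ℝ) : ℂ) * (w j : EuclideanSpace ℂ (Fin n)) μ := by
      intro μ
      conv_lhs => rw [← hs]
      simp
    simp only [hx', star_sum, Finset.mul_sum]
    rw [Finset.sum_comm]
    refine Finset.sum_congr rfl fun j _ => ?_
    obtain ⟨i, hi⟩ := hc j
    rw [← hi, star_mul', key, Finset.mul_sum]
    refine Finset.sum_congr rfl fun ν _ => ?_
    have : star ((w.repr ⟨x, hx⟩ j : ℝ) : ℂ) = ((w.repr ⟨x, hx⟩ j : ℝ) : ℂ) := Complex.conj_ofReal _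
    rw [this]; ring

/-- The relation `∑ (z_μ ⊗ z_μ* − z_μ* ⊗ z_μ) = 0` in `A ⊗_ℂ A` holds iff there
is a symmetric unitary matrix `Λ` with `z_μ* = ∑ Λ_{μν} • z_ν`. -/
theorem stmt_1 {A : Type*} [Ring A] [Algebra ℂ A] [StarRing A] [StarModule ℂ A]
    (n : ℕ) (hn : 1 ≤ n) (z : Fin n → A) :
    (∑ μ, (z μ ⊗ₜ[ℂ] star (z μ) - star (z μ) ⊗ₜ[ℂ] z μ)) = (0 : A ⊗[ℂ] A) ↔
      ∃ Λ : Matrix (Fin n) (Fin n) ℂ,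
        Λ.conjTranspose * Λ = 1 ∧ Λ.transpose = Λ ∧
          ∀ μ, star (z μ) = ∑ ν, Λ μ ν • z ν := by
  constructor
  · intro h
    let W : Submodule ℝ (EuclideanSpace ℂ (Fin n)) :=
      { carrier := {x | ∃ φ : A →ₗ[ℂ] ℂ, (∀ a, φ (star a) = star (φ a)) ∧ ∀ μ, x μ = φ (z μ)}
        add_mem' := by
          rintro x y ⟨φ, h1, h2⟩ ⟨ψ, h3, h4⟩
          exact ⟨φ + ψ, fun a => by simp [h1, h3], fun μ => by simp [h2, h4]⟩
        zero_mem' := ⟨0, by simp, by simp⟩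
        smul_mem' := by
          rintro r x ⟨φ, h1, h2⟩
          exact ⟨(r : ℂ) • φ, fun a => by simp [h1], fun μ => by simp [h2]⟩ }
    obtain ⟨Λ, hu, hs, hΛ⟩ := aux_linalg n W (by
      rintro x ⟨φ, h1, h2⟩ y ⟨ψ, h3, h4⟩
      have h5 := congrArg (LinearMap.mul' ℂ ℂ ∘ₗ TensorProduct.map φ ψ) h
      simp only [map_sum, map_sub, LinearMap.comp_apply, TensorProduct.map_tmul,
        LinearMap.mul'_apply, map_zero, h1, h3, Finset.sum_sub_distrib, sub_eq_zero] at h5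
      rw [← Complex.conj_eq_iff_im]
      simp only [PiLp.inner_apply, RCLike.inner_apply, map_sum, map_mul, h2, h4,
        Complex.conj_conj]
      refine Eq.trans ?_ (h5.trans ?_)
      · exact Finset.sum_congr rfl fun _ _ => mul_comm _ _
      · exact Finset.sum_congr rfl fun _ _ => mul_comm _ _)
    refine ⟨Λ, hu, hs, fun μ => ?_⟩
    rw [← sub_eq_zero]
    set d := star (z μ) - ∑ ν, Λ μ ν • z ν with hd
    have hherm : ∀ φ : A →ₗ[ℂ] ℂ, (∀ a, φ (star a) = star (φ a)) → φ d = 0 := by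
      intro φ hφ
      have := hΛ (WithLp.toLp 2 fun μ => φ (z μ)) ⟨φ, hφ, fun _ => rfl⟩ μ
      simp only [hd, map_sub, hφ, map_sum, map_smul, smul_eq_mul, sub_eq_zero]
      exact this
    rw [← Module.forall_dual_apply_eq_zero_iff ℂ]
    intro f
    let g : A →ₗ[ℂ] ℂ :=
      { toFun := fun a => star (f (star a))
        map_add' := by intro a b; simp
        map_smul' := by intro a b; simp }
    have hg : ∀ a, g a = star (f (star a)) := fun _ => rfl
    have e1 := hherm (f + g) (by
      intro a
      simp only [LinearMap.add_apply, hg, star_star, star_add]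
      exact add_comm _ _)
    have e2 := hherm (Complex.I • (f - g)) (by
      intro a
      simp only [LinearMap.smul_apply, LinearMap.sub_apply, smul_eq_mul, hg, star_star, star_sub,
        star_mul']
      have : star Complex.I = -Complex.I := Complex.conj_I
      rw [this]; ring)
    simp only [LinearMap.add_apply, LinearMap.smul_apply, LinearMap.sub_apply, smul_eq_mul,
      mul_eq_zero, Complex.I_ne_zero, false_or] at e1 e2
    linear_combination (e1 + e2) / 2
  · rintro ⟨Λ, -, hs, h⟩
    simp only [h, Finset.sum_sub_distrib, TensorProduct.tmul_sum, TensorProduct.sum_tmul,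
      TensorProduct.tmul_smul, TensorProduct.smul_tmul']
    rw [sub_eq_zero, Finset.sum_comm]
    refine Finset.sum_congr rfl fun i _ => Finset.sum_congr rfl fun j _ => ?_
    rw [← congrFun (congrFun hs j) i, Matrix.transpose_apply]
end

section
/- Let A be a unital star algebra over ℂ and z⁰,z¹,z²,z³ ∈ A. Let U be the 2×2 matrix over A given by U = [[z⁰ + i z³, i z¹ + z²], [i z¹ − z², z⁰ − i z³]] (that is, U = z⁰·1 + i σ₁ z¹ + i σ₂ z² + i σ₃ z³ with σ_k the Pauli matrices). Then the condition 'U·U* = U*·U and U·U* is a scalar matrix c·1 for some c ∈ A' holds if and only if the following seven relations hold: (i) Σ_μ z^μ (z^μ)* = Σ_μ (z^μ)* z^μ; and for each cyclic permutation (k,ℓ,m) of (1,2,3): (ii) z^k (z⁰)* − z⁰ (z^k)* + z^ℓ (z^m)* − z^m (z^ℓ)* = 0 and (iii) (z⁰)* z^k − (z^k)* z⁰ + (z^ℓ)* z^m − (z^m)* z^ℓ = 0. -/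
/-- The matrix `U = z⁰·1 + i σ₁ z¹ + i σ₂ z² + i σ₃ z³` with entries in a unital
star `ℂ`-algebra. -/
noncomputable def pauliU {A : Type*} [Ring A] [Algebra ℂ A] (z0 z1 z2 z3 : A) :
    Matrix (Fin 2) (Fin 2) A :=
  !![z0 + Complex.I • z3, Complex.I • z1 + z2;
     Complex.I • z1 - z2, z0 - Complex.I • z3]

theorem pauliU_inj {A : Type*} [Ring A] [Algebra ℂ A] {a b c d a' b' c' d' : A}
    (h : pauliU a b c d = pauliU a' b' c' d') : a = a' ∧ b = b' ∧ c = c' ∧ d = d' := by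
  have h00 := congrFun (congrFun h 0) 0
  have h01 := congrFun (congrFun h 0) 1
  have h10 := congrFun (congrFun h 1) 0
  have h11 := congrFun (congrFun h 1) 1
  simp [pauliU] at h00 h01 h10 h11
  have key : ∀ x y p q : A, x + y = p + q → x - y = p - q → x = p ∧ y = q := by
    intro x y p q h1 h2
    have e1 : (2 : ℂ) • x = (2 : ℂ) • p := by
      rw [two_smul, two_smul]
      calc x + x = (x + y) + (x - y) := by abel
        _ = p + p := by rw [h1, h2]; abel
    have e2 : x = p := smul_right_injective A (two_ne_zero : (2 : ℂ) ≠ 0) e1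
    subst e2
    exact ⟨rfl, add_left_cancel h1⟩
  obtain ⟨e0, e3⟩ := key _ _ _ _ h00 h11
  obtain ⟨e1, e2⟩ := key _ _ _ _ h01 h10
  exact ⟨e0, smul_right_injective A Complex.I_ne_zero e1, e2,
    smul_right_injective A Complex.I_ne_zero e3⟩

theorem pauliU_scalar {A : Type*} [Ring A] [Algebra ℂ A] (c : A) :
    c • (1 : Matrix (Fin 2) (Fin 2) A) = pauliU c 0 0 0 := by
  ext i j
  fin_cases i <;> fin_cases j <;> simp [pauliU]

theorem pauliU_mul_star {A : Type*} [Ring A] [Algebra ℂ A] [StarRing A] [StarModule ℂ A]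
    (z0 z1 z2 z3 : A) :
    pauliU z0 z1 z2 z3 * (pauliU z0 z1 z2 z3).conjTranspose =
      pauliU (z0 * star z0 + z1 * star z1 + z2 * star z2 + z3 * star z3)
        (z1 * star z0 - z0 * star z1 + z2 * star z3 - z3 * star z2)
        (z2 * star z0 - z0 * star z2 + z3 * star z1 - z1 * star z3)
        (z3 * star z0 - z0 * star z3 + z1 * star z2 - z2 * star z1) := by
  ext i j
  fin_cases i <;> fin_cases j <;>
    simp [pauliU, Matrix.mul_apply, Fin.sum_univ_two, mul_add, add_mul, mul_sub, sub_mul,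
      smul_add, smul_sub, smul_smul] <;> abel

theorem pauliU_star_mul {A : Type*} [Ring A] [Algebra ℂ A] [StarRing A] [StarModule ℂ A]
    (z0 z1 z2 z3 : A) :
    (pauliU z0 z1 z2 z3).conjTranspose * pauliU z0 z1 z2 z3 =
      pauliU (star z0 * z0 + star z1 * z1 + star z2 * z2 + star z3 * z3)
        (star z0 * z1 - star z1 * z0 + star z2 * z3 - star z3 * z2)
        (star z0 * z2 - star z2 * z0 + star z3 * z1 - star z1 * z3)
        (star z0 * z3 - star z3 * z0 + star z1 * z2 - star z2 * z1) := by
  ext i j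
  fin_cases i <;> fin_cases j <;>
    simp [pauliU, Matrix.mul_apply, Fin.sum_univ_two, mul_add, add_mul, mul_sub, sub_mul,
      smul_add, smul_sub, smul_smul] <;> abel

/-- `U U* = U* U` is a scalar matrix iff the seven relations hold. -/
theorem stmt_3 {A : Type*} [Ring A] [Algebra ℂ A] [StarRing A] [StarModule ℂ A]
    (z0 z1 z2 z3 : A) :
    (pauliU z0 z1 z2 z3 * (pauliU z0 z1 z2 z3).conjTranspose =
        (pauliU z0 z1 z2 z3).conjTranspose * pauliU z0 z1 z2 z3 ∧
      ∃ c : A, pauliU z0 z1 z2 z3 * (pauliU z0 z1 z2 z3).conjTranspose =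
        c • (1 : Matrix (Fin 2) (Fin 2) A)) ↔
    ((z0 * star z0 + z1 * star z1 + z2 * star z2 + z3 * star z3 =
        star z0 * z0 + star z1 * z1 + star z2 * z2 + star z3 * z3) ∧
      (z1 * star z0 - z0 * star z1 + z2 * star z3 - z3 * star z2 = 0 ∧
       z2 * star z0 - z0 * star z2 + z3 * star z1 - z1 * star z3 = 0 ∧
       z3 * star z0 - z0 * star z3 + z1 * star z2 - z2 * star z1 = 0) ∧
      (star z0 * z1 - star z1 * z0 + star z2 * z3 - star z3 * z2 = 0 ∧
       star z0 * z2 - star z2 * z0 + star z3 * z1 - star z1 * z3 = 0 ∧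
       star z0 * z3 - star z3 * z0 + star z1 * z2 - star z2 * z1 = 0)) := by
  rw [pauliU_mul_star, pauliU_star_mul]
  simp only [pauliU_scalar]
  constructor
  · rintro ⟨h, c, hc⟩
    obtain ⟨a0, a1, a2, a3⟩ := pauliU_inj h
    obtain ⟨_, b1, b2, b3⟩ := pauliU_inj hc
    exact ⟨a0, ⟨b1, b2, b3⟩, a1.symm.trans b1, a2.symm.trans b2, a3.symm.trans b3⟩
  · rintro ⟨h0, ⟨b1, b2, b3⟩, d1, d2, d3⟩
    rw [b1, b2, b3, d1, d2, d3, h0]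
    exact ⟨rfl, _, rfl⟩
end

section
/- Let Γ be the group of bijections of ℝ³ generated by: translations by all vectors of π·ℤ³, all permutations of the three coordinates, and the map T(φ₁,φ₂,φ₃) = (−φ₁, φ₂−φ₁, φ₃−φ₁). Let A = {φ ∈ ℝ³ : π/2 ≥ φ₁ ≥ φ₂ ≥ φ₃ ≥ 0} and B = {φ ∈ ℝ³ : φ₃ + π/2 ≥ φ₁ ≥ π/2 ≥ φ₂ ≥ φ₃}. Then A ∪ B is a fundamental domain for Γ: every point of ℝ³ lies in the Γ-orbit of some point of A ∪ B, and two points of the topological interior of A ∪ B which lie in the same Γ-orbit are equal. -/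
/-- The transformation `T(φ₁,φ₂,φ₃) = (−φ₁, φ₂−φ₁, φ₃−φ₁)` as a permutation of `ℝ³`. -/
noncomputable def Tmap : Equiv.Perm (Fin 3 → ℝ) :=
  Function.Involutive.toPerm (fun φ => ![-φ 0, φ 1 - φ 0, φ 2 - φ 0]) (by
    intro φ
    funext i
    fin_cases i <;> simp)

/-- The generators of the group `Γ`: translations by vectors of `π·ℤ³`,
permutations of the three coordinates, and the map `T`. -/
noncomputable def genSet5 : Set (Equiv.Perm (Fin 3 → ℝ)) :=
  {e | (∃ v : Fin 3 → ℝ, (∀ i, ∃ k : ℤ, v i = Real.pi * (k : ℝ)) ∧ e = Equiv.addLeft v)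
      ∨ (∃ σ : Equiv.Perm (Fin 3), e = Equiv.arrowCongr σ (Equiv.refl ℝ))
      ∨ e = Tmap}

/-- The closed simplex `A`. -/
def simplexA : Set (Fin 3 → ℝ) :=
  {φ | Real.pi / 2 ≥ φ 0 ∧ φ 0 ≥ φ 1 ∧ φ 1 ≥ φ 2 ∧ φ 2 ≥ 0}

/-- The closed simplex `B`. -/
def simplexB : Set (Fin 3 → ℝ) :=
  {φ | φ 2 + Real.pi / 2 ≥ φ 0 ∧ φ 0 ≥ Real.pi / 2 ∧ Real.pi / 2 ≥ φ 1 ∧ φ 1 ≥ φ 2}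

def Orb5 (x y : Fin 3 → ℝ) : Prop := ∃ g ∈ Subgroup.closure genSet5, g x = y

lemma Orb5.trans {x y z : Fin 3 → ℝ} (h : Orb5 x y) (h' : Orb5 y z) : Orb5 x z := by
  obtain ⟨g, hg, rfl⟩ := h
  obtain ⟨g', hg', rfl⟩ := h'
  exact ⟨g' * g, mul_mem hg' hg, rfl⟩

lemma Orb5.refl (x : Fin 3 → ℝ) : Orb5 x x := ⟨1, one_mem _, rfl⟩

lemma orb_tr5 (a b c : ℝ) (k l m : ℤ) :
    Orb5 ![a, b, c] ![Real.pi * k + a, Real.pi * l + b, Real.pi * m + c] := by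
  refine ⟨Equiv.addLeft ![Real.pi * k, Real.pi * l, Real.pi * m],
    Subgroup.subset_closure (Or.inl ⟨_, ?_, rfl⟩), ?_⟩
  · intro i
    fin_cases i
    · exact ⟨k, rfl⟩
    · exact ⟨l, rfl⟩
    · exact ⟨m, rfl⟩
  · funext i
    fin_cases i <;> simp

lemma orb_T5 (a b c : ℝ) : Orb5 ![a, b, c] ![-a, b - a, c - a] :=
  ⟨Tmap, Subgroup.subset_closure (Or.inr (Or.inr rfl)), by
    funext i
    fin_cases i <;> rfl⟩

lemma orb_s01 (a b c : ℝ) : Orb5 ![a, b, c] ![b, a, c] :=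
  ⟨_, Subgroup.subset_closure (Or.inr (Or.inl ⟨Equiv.swap 0 1, rfl⟩)), by
    funext i
    fin_cases i <;> simp [Equiv.arrowCongr, Equiv.swap_apply_def]⟩

lemma orb_s12 (a b c : ℝ) : Orb5 ![a, b, c] ![a, c, b] :=
  ⟨_, Subgroup.subset_closure (Or.inr (Or.inl ⟨Equiv.swap 1 2, rfl⟩)), by
    funext i
    fin_cases i <;> simp [Equiv.arrowCongr, Equiv.swap_apply_def]⟩

lemma orb_rho5 (a b c : ℝ) : Orb5 ![a, b, c] ![Real.pi - c, a - c, b - c] := by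
  have h1 := ((orb_s12 a b c).trans (orb_s01 a c b)).trans (orb_T5 c a b)
  have h2 := orb_tr5 (-c) (a - c) (b - c) 1 0 0
  have e : ![Real.pi * ((1 : ℤ) : ℝ) + -c, Real.pi * ((0 : ℤ) : ℝ) + (a - c),
      Real.pi * ((0 : ℤ) : ℝ) + (b - c)] = ![Real.pi - c, a - c, b - c] := by
    congr 1
    · push_cast; ring
    · simp
  rw [e] at h2
  exact h1.trans h2

lemma mem_dom5 {a b c : ℝ} (h1 : 0 ≤ c) (h2 : c ≤ b) (h3 : b ≤ a) (h4 : b ≤ Real.pi / 2)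
    (h5 : a ≤ c + Real.pi / 2) : ![a, b, c] ∈ simplexA ∪ simplexB := by
  rcases le_total a (Real.pi / 2) with h | h
  · left
    simp [simplexA]
    exact ⟨h, h3, h2, h1⟩
  · right
    simp [simplexB]
    exact ⟨h5, h, h4, h2⟩

lemma dom_sorted5 (a b c : ℝ) (h1 : 0 ≤ c) (h2 : c ≤ b) (h3 : b ≤ a) (h4 : a ≤ Real.pi) :
    ∃ y, Orb5 ![a, b, c] y ∧ y ∈ simplexA ∪ simplexB := by
  have r1 := orb_rho5 a b c
  have r2 := r1.trans (orb_rho5 _ _ _)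
  have r3 := r2.trans (orb_rho5 _ _ _)
  rcases le_total b (Real.pi / 2) with h | h <;>
  rcases le_total a (c + Real.pi / 2) with h' | h'
  · exact ⟨_, Orb5.refl _, mem_dom5 h1 h2 h3 h h'⟩
  · exact ⟨_, r3, mem_dom5 (by linarith) (by linarith) (by linarith) (by linarith) (by linarith)⟩
  · exact ⟨_, r1, mem_dom5 (by linarith) (by linarith) (by linarith) (by linarith) (by linarith)⟩
  · exact ⟨_, r2, mem_dom5 (by linarith) (by linarith) (by linarith) (by linarith) (by linarith)⟩

lemma exists_shift5 (a : ℝ) : ∃ k : ℤ, 0 ≤ Real.pi * k + a ∧ Real.pi * k + a ≤ Real.pi := by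
  have hp := Real.pi_pos
  refine ⟨-⌊a / Real.pi⌋, ?_, ?_⟩
  · have := Int.floor_le (a / Real.pi)
    rw [le_div_iff₀ hp] at this
    push_cast
    linarith
  · have := (Int.lt_floor_add_one (a / Real.pi)).le
    rw [div_le_iff₀ hp] at this
    push_cast
    linarith

lemma exists_dom5 (x : Fin 3 → ℝ) :
    ∃ g ∈ Subgroup.closure genSet5, g x ∈ simplexA ∪ simplexB := by
  suffices h : ∃ y, Orb5 x y ∧ y ∈ simplexA ∪ simplexB by
    obtain ⟨y, ⟨g, hg, rfl⟩, hy⟩ := h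
    exact ⟨g, hg, hy⟩
  have ex : x = ![x 0, x 1, x 2] := by
    funext i
    fin_cases i <;> rfl
  rw [ex]
  obtain ⟨k, hk, hk'⟩ := exists_shift5 (x 0)
  obtain ⟨l, hl, hl'⟩ := exists_shift5 (x 1)
  obtain ⟨m, hm, hm'⟩ := exists_shift5 (x 2)
  have h0 := orb_tr5 (x 0) (x 1) (x 2) k l m
  generalize Real.pi * k + x 0 = a at *
  generalize Real.pi * l + x 1 = b at *
  generalize Real.pi * m + x 2 = c at *
  suffices h : ∃ y, Orb5 ![a, b, c] y ∧ y ∈ simplexA ∪ simplexB by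
    obtain ⟨y, hy, hy'⟩ := h
    exact ⟨y, h0.trans hy, hy'⟩
  have key : ∀ {a' b' c' : ℝ}, Orb5 ![a, b, c] ![a', b', c'] → 0 ≤ c' → c' ≤ b' → b' ≤ a' →
      a' ≤ Real.pi → ∃ y, Orb5 ![a, b, c] y ∧ y ∈ simplexA ∪ simplexB := by
    intro a' b' c' h p q r s
    obtain ⟨y, hy, hy'⟩ := dom_sorted5 a' b' c' p q r s
    exact ⟨y, h.trans hy, hy'⟩
  rcases le_total a b with h1 | h1 <;> rcases le_total b c with h2 | h2 <;>
    rcases le_total a c with h3 | h3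
  · exact key (((orb_s01 _ _ _).trans (orb_s12 _ _ _)).trans (orb_s01 _ _ _)) hk h1 h2 hm'
  · exact key (((orb_s01 _ _ _).trans (orb_s12 _ _ _)).trans (orb_s01 _ _ _)) hk h1 h2 hm'
  · exact key ((orb_s01 _ _ _).trans (orb_s12 _ _ _)) hk h3 h2 hl'
  · exact key (orb_s01 _ _ _) hm h3 h1 hl'
  · exact key ((orb_s12 _ _ _).trans (orb_s01 _ _ _)) hl h1 h3 hm'
  · exact key (orb_s12 _ _ _) hl h2 h3 hk'
  · exact key (Orb5.refl _) hm h2 h1 hk'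
  · exact key (Orb5.refl _) hm h2 h1 hk'

/-- Adjoin the coordinate `0`. -/
def ext5 (x : Fin 3 → ℝ) : Fin 4 → ℝ := ![0, x 0, x 1, x 2]

def Rel5 (x y : Fin 3 → ℝ) : Prop :=
  ∃ (σ : Equiv.Perm (Fin 4)) (k : Fin 4 → ℤ) (c : ℝ),
    ∀ i, ext5 y i = ext5 x (σ i) + c + Real.pi * k i

lemma Rel5.trans {x y z : Fin 3 → ℝ} (h : Rel5 x y) (h' : Rel5 y z) : Rel5 x z := by
  obtain ⟨σ, k, c, h⟩ := h
  obtain ⟨σ', k', c', h'⟩ := h'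
  refine ⟨σ'.trans σ, fun i => k (σ' i) + k' i, c + c', fun i => ?_⟩
  rw [h', h]
  simp only [Equiv.trans_apply]
  push_cast
  ring

lemma Rel5.symm {x y : Fin 3 → ℝ} (h : Rel5 x y) : Rel5 y x := by
  obtain ⟨σ, k, c, h⟩ := h
  refine ⟨σ.symm, fun i => -k (σ.symm i), -c, fun i => ?_⟩
  rw [h]
  simp
  ring

lemma rel_perm5 (σ : Equiv.Perm (Fin 3)) (x : Fin 3 → ℝ) :
    Rel5 x (Equiv.arrowCongr σ (Equiv.refl ℝ) x) := by
  have e : ∀ (z : Fin 3 → ℝ) (i : Fin 3), ext5 z i.succ = z i := by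
    intro z i
    fin_cases i <;> rfl
  refine ⟨Equiv.Perm.decomposeFin.symm (0, σ.symm), 0, 0, fun i => ?_⟩
  refine Fin.cases ?_ (fun j => ?_) i
  · simp [ext5]
  · rw [e, Equiv.Perm.decomposeFin_symm_apply_succ, Equiv.swap_self, Equiv.refl_apply, e]
    simp [Equiv.arrowCongr]

lemma rel_of_mem5 (g : Equiv.Perm (Fin 3 → ℝ)) (hg : g ∈ Subgroup.closure genSet5) :
    ∀ x, Rel5 x (g x) := by
  induction hg using Subgroup.closure_induction with
  | mem g hg =>
    intro x
    rcases hg with ⟨v, hv, rfl⟩ | ⟨σ, rfl⟩ | rfl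
    · choose k hk using hv
      refine ⟨1, ![0, k 0, k 1, k 2], 0, fun i => ?_⟩
      fin_cases i <;> simp [ext5, hk, add_comm]
    · exact rel_perm5 σ x
    · refine ⟨Equiv.swap 0 1, 0, -x 0, fun i => ?_⟩
      fin_cases i <;> simp [ext5, Tmap, Equiv.swap_apply_def, sub_eq_add_neg]
  | one => exact fun x => ⟨1, 0, 0, fun i => by simp⟩
  | mul g h _ _ ihg ihh => exact fun x => (ihh x).trans (ihg (h x))
  | inv g _ ih =>
    intro x
    have := (ih (g⁻¹ x)).symm
    simpa using this

def Int5 (x : Fin 3 → ℝ) : Prop :=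
  0 < x 2 ∧ x 2 < x 1 ∧ x 1 < x 0 ∧ x 1 < Real.pi / 2 ∧ x 0 < x 2 + Real.pi / 2

lemma dir5 {s : Set (Fin 3 → ℝ)} {x : Fin 3 → ℝ} (hx : x ∈ interior s) (v : Fin 3 → ℝ) :
    ∃ t : ℝ, 0 < t ∧ x + t • v ∈ s := by
  have hc : Filter.Tendsto (fun t : ℝ => x + t • v) (nhdsWithin 0 (Set.Ioi 0)) (nhds x) := by
    have : Continuous (fun t : ℝ => x + t • v) := by fun_prop
    have h := this.tendsto 0
    simp only [zero_smul, add_zero] at h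
    exact h.mono_left nhdsWithin_le_nhds
  have h1 := hc.eventually (mem_interior_iff_mem_nhds.1 hx)
  obtain ⟨t, h, ht⟩ := (h1.and self_mem_nhdsWithin).exists
  exact ⟨t, ht, h⟩

lemma closed5 {x : Fin 3 → ℝ} (hx : x ∈ simplexA ∪ simplexB) :
    0 ≤ x 2 ∧ x 2 ≤ x 1 ∧ x 1 ≤ x 0 ∧ x 1 ≤ Real.pi / 2 ∧ x 0 ≤ x 2 + Real.pi / 2 := by
  rcases hx with ⟨h1, h2, h3, h4⟩ | ⟨h1, h2, h3, h4⟩ <;>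
  refine ⟨?_, ?_, ?_, ?_, ?_⟩ <;> linarith

lemma interior5 (x : Fin 3 → ℝ) (hx : x ∈ interior (simplexA ∪ simplexB)) : Int5 x := by
  refine ⟨?_, ?_, ?_, ?_, ?_⟩
  · obtain ⟨t, ht, h⟩ := dir5 hx ![0, 0, -1]
    have := closed5 h
    simp at this
    linarith
  · obtain ⟨t, ht, h⟩ := dir5 hx ![0, -1, 0]
    have := (closed5 h).2.1
    simp at this
    linarith
  · obtain ⟨t, ht, h⟩ := dir5 hx ![-1, 0, 0]
    have := (closed5 h).2.2.1
    simp at this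
    linarith
  · obtain ⟨t, ht, h⟩ := dir5 hx ![0, 1, 0]
    have := (closed5 h).2.2.2.1
    simp at this
    linarith
  · obtain ⟨t, ht, h⟩ := dir5 hx ![1, 0, 0]
    have := (closed5 h).2.2.2.2
    simp at this
    linarith

lemma shift01 {y u v : ℝ} {m : ℤ} (h : y = u - v + Real.pi * m) (hy : 0 < y) (hy' : y < Real.pi)
    (hu : 0 ≤ u) (hu' : u < Real.pi) (hv : 0 ≤ v) (hv' : v < Real.pi) :
    y = u - v ∨ y = u - v + Real.pi := by
  have hp := Real.pi_pos
  have h1 : (-1 : ℝ) < m := by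
    by_contra hc
    have : Real.pi * m ≤ Real.pi * (-1) := mul_le_mul_of_nonneg_left (not_lt.1 hc) hp.le
    linarith
  have h2 : (m : ℝ) < 2 := by
    by_contra hc
    have : Real.pi * 2 ≤ Real.pi * m := mul_le_mul_of_nonneg_left (not_lt.1 hc) hp.le
    linarith
  have h1' : -1 < m := by exact_mod_cast h1
  have h2' : m < 2 := by exact_mod_cast h2
  have : m = 0 ∨ m = 1 := by omega
  rcases this with rfl | rfl
  · left; simpa using h
  · right; simpa using h

lemma ext_bd5 {x : Fin 3 → ℝ} (hx : Int5 x) (i : Fin 4) : 0 ≤ ext5 x i ∧ ext5 x i < Real.pi := by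
  have hp := Real.pi_pos
  obtain ⟨h1, h2, h3, h4, h5⟩ := hx
  fin_cases i <;> simp [ext5] <;> first | exact hp | (constructor <;> linarith)

set_option maxHeartbeats 4000000 in
lemma uniq5 (x y : Fin 3 → ℝ) (hx : Int5 x) (hy : Int5 y) (h : Rel5 x y) : x = y := by
  obtain ⟨σ, k, c, h⟩ := h
  have hp := Real.pi_pos
  have key : ∀ i, 0 < ext5 y i → ext5 y i = ext5 x (σ i) - ext5 x (σ 0) ∨
      ext5 y i = ext5 x (σ i) - ext5 x (σ 0) + Real.pi := by
    intro i hi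
    refine shift01 (m := k i - k 0) ?_ hi (ext_bd5 hy i).2 (ext_bd5 hx _).1 (ext_bd5 hx _).2
      (ext_bd5 hx _).1 (ext_bd5 hx _).2
    have h0 := h 0
    have e0 : ext5 y 0 = 0 := rfl
    rw [e0] at h0
    rw [h i]
    push_cast
    linarith
  obtain ⟨a1, a2, a3, a4, a5⟩ := hx
  obtain ⟨b1, b2, b3, b4, b5⟩ := hy
  have k1 := key 1 (show 0 < y 0 by linarith)
  have k2 := key 2 (show 0 < y 1 by linarith)
  have k3 := key 3 (show 0 < y 2 by linarith)
  have n01 : σ 0 ≠ σ 1 := σ.injective.ne (by decide)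
  have n02 : σ 0 ≠ σ 2 := σ.injective.ne (by decide)
  have n03 : σ 0 ≠ σ 3 := σ.injective.ne (by decide)
  have n12 : σ 1 ≠ σ 2 := σ.injective.ne (by decide)
  have n13 : σ 1 ≠ σ 3 := σ.injective.ne (by decide)
  have n23 : σ 2 ≠ σ 3 := σ.injective.ne (by decide)
  have e1 : ext5 y 1 = y 0 := rfl
  have e2 : ext5 y 2 = y 1 := rfl
  have e3 : ext5 y 3 = y 2 := rfl
  have f0 : ext5 x 0 = 0 := rfl
  have f1 : ext5 x 1 = x 0 := rfl
  have f2 : ext5 x 2 = x 1 := rfl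
  have f3 : ext5 x 3 = x 2 := rfl
  rw [e1] at k1
  rw [e2] at k2
  rw [e3] at k3
  clear key h e1 e2 e3
  generalize σ 0 = j0 at *
  generalize σ 1 = j1 at *
  generalize σ 2 = j2 at *
  generalize σ 3 = j3 at *
  suffices h : x 0 = y 0 ∧ x 1 = y 1 ∧ x 2 = y 2 by
    funext i
    fin_cases i
    · exact h.1
    · exact h.2.1
    · exact h.2.2
  have d : ∀ j : Fin 4, j = 0 ∨ j = 1 ∨ j = 2 ∨ j = 3 := by decide
  rcases d j0 with rfl | rfl | rfl | rfl <;> rcases d j1 with rfl | rfl | rfl | rfl <;>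
  first
  | exact absurd rfl n01
  | (rcases d j2 with rfl | rfl | rfl | rfl <;>
    first
    | exact absurd rfl n02
    | exact absurd rfl n12
    | (rcases d j3 with rfl | rfl | rfl | rfl <;>
      first
      | exact absurd rfl n03
      | exact absurd rfl n13
      | exact absurd rfl n23
      | (simp only [f0, f1, f2, f3] at k1 k2 k3
         rcases k1 with k1 | k1 <;> rcases k2 with k2 | k2 <;> rcases k3 with k3 | k3 <;>
         first
         | (exfalso; linarith)
         | (refine ⟨?_, ?_, ?_⟩ <;> linarith))))

/-- `A ∪ B` is a fundamental domain for the action of `Γ` on `ℝ³`. -/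
theorem stmt_5 :
    (∀ x : Fin 3 → ℝ, ∃ g ∈ Subgroup.closure genSet5, g x ∈ simplexA ∪ simplexB) ∧
    (∀ x y : Fin 3 → ℝ, x ∈ interior (simplexA ∪ simplexB) →
      y ∈ interior (simplexA ∪ simplexB) →
      (∃ g ∈ Subgroup.closure genSet5, g x = y) → x = y) := by
  refine ⟨fun x => exists_dom5 x, ?_⟩
  rintro x y hx hy ⟨g, hg, rfl⟩
  exact uniq5 x _ (interior5 x hx) (interior5 _ hy) (rel_of_mem5 g hg x)
end

section
/- For all real numbers φ₁, φ₂, φ₃ with cos φ₂ ≠ 0 and cos φ₃ ≠ 0, one has the identity sin(2φ₂)·sin(φ₁ + φ₃ − φ₂)·tan(φ₃)/cos²(φ₂) + sin(2φ₃)·sin(φ₁ + φ₂ − φ₃)·tan(φ₂)/cos²(φ₃) = 4·sin φ₁ · sin φ₂ · sin φ₃ · (1 + tan φ₂ · tan φ₃). (Consequently the same holds for each cyclic permutation (k,ℓ,m) of (1,2,3): the derivative of s_k = 1 + tan φ_ℓ tan φ_m along the vector field Σ_j sin(2φ_j) sin(φ_{k'}+φ_{ℓ'}−φ_j) ∂/∂φ_j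 equals 4 (∏ sin φ_j)·s_k.) -/
/-- The trigonometric identity expressing that the derivative of
`s₁ = 1 + tan φ₂ tan φ₃` along the flow equals `4 (∏ sin φ_j) s₁`. -/
theorem stmt_6 (φ1 φ2 φ3 : ℝ) (h2 : Real.cos φ2 ≠ 0) (h3 : Real.cos φ3 ≠ 0) :
    Real.sin (2 * φ2) * Real.sin (φ1 + φ3 - φ2) * Real.tan φ3 / (Real.cos φ2) ^ 2
      + Real.sin (2 * φ3) * Real.sin (φ1 + φ2 - φ3) * Real.tan φ2 / (Real.cos φ3) ^ 2
    = 4 * Real.sin φ1 * Real.sin φ2 * Real.sin φ3 *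
        (1 + Real.tan φ2 * Real.tan φ3) := by
  rw [Real.sin_two_mul, Real.sin_two_mul, Real.tan_eq_sin_div_cos, Real.tan_eq_sin_div_cos,
    Real.sin_sub, Real.sin_sub, Real.sin_add, Real.sin_add, Real.cos_add, Real.cos_add]
  field_simp
  ring
end

section
/- Let φ = (φ₁,φ₂,φ₃) ∈ ℝ³ satisfy δ(φ) ≠ 0, where δ(φ) = sin φ₁ sin φ₂ sin φ₃ · cos(φ₁−φ₂) cos(φ₂−φ₃) cos(φ₃−φ₁). Then there exist nonzero complex numbers λ₀, λ₁, λ₂, λ₃, each of which is either real or purely imaginary (equivalently λ_μ² ∈ ℝ for each μ), such that: λ₀² = sin φ₁ sin φ₂ sin φ₃; λ_k² = sin φ_k · cos(φ_k − φ_ℓ) · cos(φ_k − φ_m) for each k ∈ {1,2,3} (with {ℓ,m} = {1,2,3}∖{k}); λ₀λ₁λ₂λ₃ = −δ(φ); and for every cyclic permutation (k,ℓ,m) of (1,2,3): sin(φ_k)·λ_ℓ λ_m + cos(φ_ℓ − φ_m)·λ₀ λ_k = 0. -/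
/-- Existence of the rescaling constants `λ_μ` (each real or purely imaginary)
with the prescribed squares, product `−δ(φ)` and the three bilinear relations. -/
theorem stmt_7 (φ1 φ2 φ3 : ℝ)
    (hδ : Real.sin φ1 * Real.sin φ2 * Real.sin φ3 *
      (Real.cos (φ1 - φ2) * Real.cos (φ2 - φ3) * Real.cos (φ3 - φ1)) ≠ 0) :
    ∃ l0 l1 l2 l3 : ℂ,
      l0 ≠ 0 ∧ l1 ≠ 0 ∧ l2 ≠ 0 ∧ l3 ≠ 0 ∧
      ((l0 ^ 2).im = 0 ∧ (l1 ^ 2).im = 0 ∧ (l2 ^ 2).im = 0 ∧ (l3 ^ 2).im = 0) ∧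
      l0 ^ 2 = ((Real.sin φ1 * Real.sin φ2 * Real.sin φ3 : ℝ) : ℂ) ∧
      l1 ^ 2 = ((Real.sin φ1 * (Real.cos (φ1 - φ2) * Real.cos (φ1 - φ3)) : ℝ) : ℂ) ∧
      l2 ^ 2 = ((Real.sin φ2 * (Real.cos (φ2 - φ3) * Real.cos (φ2 - φ1)) : ℝ) : ℂ) ∧
      l3 ^ 2 = ((Real.sin φ3 * (Real.cos (φ3 - φ1) * Real.cos (φ3 - φ2)) : ℝ) : ℂ) ∧
      l0 * l1 * l2 * l3 = -((Real.sin φ1 * Real.sin φ2 * Real.sin φ3 *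
        (Real.cos (φ1 - φ2) * Real.cos (φ2 - φ3) * Real.cos (φ3 - φ1)) : ℝ) : ℂ) ∧
      ((Real.sin φ1 : ℂ) * (l2 * l3) + (Real.cos (φ2 - φ3) : ℂ) * (l0 * l1) = 0 ∧
       (Real.sin φ2 : ℂ) * (l3 * l1) + (Real.cos (φ3 - φ1) : ℂ) * (l0 * l2) = 0 ∧
       (Real.sin φ3 : ℂ) * (l1 * l2) + (Real.cos (φ1 - φ2) : ℂ) * (l0 * l3) = 0) := by
  have e21 : Real.cos (φ2 - φ1) = Real.cos (φ1 - φ2) := by rw [← Real.cos_neg]; ring_nf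
  have e32 : Real.cos (φ3 - φ2) = Real.cos (φ2 - φ3) := by rw [← Real.cos_neg]; ring_nf
  have e13 : Real.cos (φ1 - φ3) = Real.cos (φ3 - φ1) := by rw [← Real.cos_neg]; ring_nf
  rw [e21, e32, e13]
  generalize Real.cos (φ1 - φ2) = x at *
  generalize Real.cos (φ2 - φ3) = y at *
  generalize Real.cos (φ3 - φ1) = z at *
  generalize Real.sin φ1 = p at *
  generalize Real.sin φ2 = q at *
  generalize Real.sin φ3 = r at *
  have key : ∀ t : ℝ, ∃ w : ℂ, (t : ℂ) = w ^ 2 := fun t => by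
    obtain ⟨w, hw⟩ := IsAlgClosed.exists_pow_nat_eq (t : ℂ) (n := 2) (by norm_num)
    exact ⟨w, hw.symm⟩
  obtain ⟨a, ha⟩ := key p
  obtain ⟨b, hb⟩ := key q
  obtain ⟨c, hc⟩ := key r
  obtain ⟨u, hu⟩ := key x
  obtain ⟨v, hv⟩ := key y
  obtain ⟨w, hw⟩ := key z
  have h0 : (a * b * c) ^ 2 = ((p * q * r : ℝ) : ℂ) := by
    push_cast; rw [ha, hb, hc]; ring
  have h1 : (a * u * w) ^ 2 = ((p * (x * z) : ℝ) : ℂ) := by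
    push_cast; rw [ha, hu, hw]; ring
  have h2 : (b * v * u) ^ 2 = ((q * (y * x) : ℝ) : ℂ) := by
    push_cast; rw [hb, hu, hv]; ring
  have h3 : (-(c * w * v)) ^ 2 = ((r * (z * y) : ℝ) : ℂ) := by
    push_cast; rw [hc, hv, hw]; ring
  have nz : ∀ (l : ℂ) (t : ℝ), l ^ 2 = (t : ℂ) → t ≠ 0 → l ≠ 0 := by
    rintro l t h ht rfl
    apply ht
    have h' : (t : ℂ) = 0 := by rw [← h]; norm_num
    exact_mod_cast h'
  simp only [mul_ne_zero_iff] at hδ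
  obtain ⟨⟨⟨hp, hq⟩, hr⟩, ⟨hx, hy⟩, hz⟩ := hδ
  refine ⟨a * b * c, a * u * w, b * v * u, -(c * w * v),
    nz _ _ h0 (by simp [*]), nz _ _ h1 (by simp [*]), nz _ _ h2 (by simp [*]),
    nz _ _ h3 (by simp [*]),
    ⟨by rw [h0, Complex.ofReal_im], by rw [h1, Complex.ofReal_im],
      by rw [h2, Complex.ofReal_im], by rw [h3, Complex.ofReal_im]⟩,
    h0, h1, h2, h3, ?_, ?_, ?_, ?_⟩
  · push_cast; rw [ha, hb, hc, hu, hv, hw]; ring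
  · rw [ha, hv]; ring
  · rw [hb, hw]; ring
  · rw [hc, hu]; ring
end

section
/- The map φ = (φ₁,φ₂,φ₃) ↦ s(φ) = (1 + tan φ₂ tan φ₃, 1 + tan φ₃ tan φ₁, 1 + tan φ₁ tan φ₂) is a bijection from the open simplex A° = {φ ∈ ℝ³ : π/2 > φ₁ > φ₂ > φ₃ > 0} onto the open region {s ∈ ℝ³ : 1 < s₁ < s₂ < s₃}. -/
theorem aux_inj {x y z x' y' z' : ℝ} (hx : 0 < x) (hy : 0 < y) (hz : 0 < z) (hx' : 0 < x')
    (h1 : y * z = y' * z') (h2 : z * x = z' * x') (h3 : x * y = x' * y') : x = x' := by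
  have hyz : 0 < y * z := mul_pos hy hz
  have h : (y * z) * x ^ 2 = (y * z) * x' ^ 2 := by
    calc (y * z) * x ^ 2 = (z * x) * (x * y) := by ring
      _ = (z' * x') * (x' * y') := by rw [h2, h3]
      _ = (y' * z') * x' ^ 2 := by ring
      _ = (y * z) * x' ^ 2 := by rw [h1]
  have h' := mul_left_cancel₀ hyz.ne' h
  exact (pow_left_inj₀ hx.le hx'.le two_ne_zero).1 h'

/-- The map `φ ↦ (1 + tan φ₂ tan φ₃, 1 + tan φ₃ tan φ₁, 1 + tan φ₁ tan φ₂)` is a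
bijection from the open simplex `A° = {π/2 > φ₁ > φ₂ > φ₃ > 0}` onto
`{1 < s₁ < s₂ < s₃}`. -/
theorem stmt_8 :
    Set.BijOn
      (fun φ : ℝ × ℝ × ℝ =>
        ((1 + Real.tan φ.2.1 * Real.tan φ.2.2,
          1 + Real.tan φ.2.2 * Real.tan φ.1,
          1 + Real.tan φ.1 * Real.tan φ.2.1) : ℝ × ℝ × ℝ))
      {φ : ℝ × ℝ × ℝ | Real.pi / 2 > φ.1 ∧ φ.1 > φ.2.1 ∧ φ.2.1 > φ.2.2 ∧ φ.2.2 > 0}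
      {s : ℝ × ℝ × ℝ | 1 < s.1 ∧ s.1 < s.2.1 ∧ s.2.1 < s.2.2} := by

  have mono : ∀ {u v : ℝ}, 0 < u → u < v → v < Real.pi / 2 → Real.tan u < Real.tan v :=
    fun hu huv hv => Real.tan_lt_tan_of_nonneg_of_lt_pi_div_two hu.le hv huv
  have inj : ∀ {u v : ℝ}, 0 < u → u < Real.pi / 2 → 0 < v → v < Real.pi / 2 →
      Real.tan u = Real.tan v → u = v := fun hu hu' hv hv' h =>
    Real.tan_inj_of_lt_of_lt_pi_div_two (by linarith) hu' (by linarith) hv' h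
  refine ⟨?_, ?_, ?_⟩
  · rintro ⟨p, q, r⟩ ⟨h1, h2, h3, h4⟩
    simp only at h1 h2 h3 h4
    have hr := Real.tan_pos_of_pos_of_lt_pi_div_two h4 (by linarith)
    have hrq := mono h4 h3 (by linarith)
    have hqp := mono (h4.trans h3) h2 h1
    refine ⟨?_, ?_, ?_⟩ <;> simp only
    · have := mul_pos (hr.trans hrq) hr
      linarith
    · nlinarith
    · nlinarith
  · rintro ⟨p, q, r⟩ ⟨h1, h2, h3, h4⟩ ⟨p', q', r'⟩ ⟨h1', h2', h3', h4'⟩ h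
    simp only [Prod.mk.injEq, add_right_inj] at h h1 h2 h3 h4 h1' h2' h3' h4'
    obtain ⟨e1, e2, e3⟩ := h
    have P : ∀ x : ℝ, 0 < x → x < Real.pi / 2 → 0 < Real.tan x :=
      fun _ => Real.tan_pos_of_pos_of_lt_pi_div_two
    have tp := P p (by linarith) (by linarith)
    have tq := P q (by linarith) (by linarith)
    have tr := P r (by linarith) (by linarith)
    have tp' := P p' (by linarith) (by linarith)
    have tq' := P q' (by linarith) (by linarith)
    have tr' := P r' (by linarith) (by linarith)
    have a1 := inj (by linarith) (by linarith) (by linarith) (by linarith)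
      (aux_inj tp tq tr tp' e1 e2 e3)
    have a2 := inj (by linarith) (by linarith) (by linarith) (by linarith)
      (aux_inj tq tr tp tq' e2 e3 e1)
    have a3 := inj (by linarith) (by linarith) (by linarith) (by linarith)
      (aux_inj tr tp tq tr' e3 e1 e2)
    rw [a1, a2, a3]
  · rintro ⟨s, t, u⟩ ⟨h1, h2, h3⟩
    simp only at h1 h2 h3
    obtain ⟨a, rfl⟩ : ∃ a, s = 1 + a := ⟨s - 1, by ring⟩
    obtain ⟨b, rfl⟩ : ∃ b, t = 1 + b := ⟨t - 1, by ring⟩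
    obtain ⟨c, rfl⟩ : ∃ c, u = 1 + c := ⟨u - 1, by ring⟩
    have ha : 0 < a := by linarith
    have hab : a < b := by linarith
    have hbc : b < c := by linarith
    have hb : 0 < b := by linarith
    have hc : 0 < c := by linarith
    have hd : 0 < a * b * c := by positivity
    obtain ⟨d, hd0, hd2⟩ : ∃ d : ℝ, 0 < d ∧ d * d = a * b * c :=
      ⟨√(a * b * c), Real.sqrt_pos.2 hd, Real.mul_self_sqrt hd.le⟩
    refine ⟨(Real.arctan (d / a), Real.arctan (d / b), Real.arctan (d / c)),
      ⟨Real.arctan_lt_pi_div_two _, ?_, ?_, ?_⟩, ?_⟩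
    · exact Real.arctan_strictMono (div_lt_div_of_pos_left hd0 ha hab)
    · exact Real.arctan_strictMono (div_lt_div_of_pos_left hd0 hb hbc)
    · exact Real.arctan_pos.2 (by positivity)
    · simp only [Real.tan_arctan, Prod.mk.injEq, add_right_inj, div_mul_div_comm, hd2]
      refine ⟨?_, ?_, ?_⟩ <;> field_simp
end

section
/- For s = (s₁,s₂,s₃) ∈ ℝ³ with all s_k ≠ 0, define ρ(s)_k = (s_ℓ − s_m)/s_k for each cyclic permutation (k,ℓ,m) of (1,2,3). Then: (a) ∏_{k=1}^{3} (1 + ρ(s)_k) = ∏_{k=1}^{3} (1 − ρ(s)_k); (b) if s' ∈ ℝ³ also has all coordinates nonzero and ρ(s') = ρ(s), then there exists λ ≠ 0 with s' = λ·s; (c) the transformation s ↦ s̃ defined by s̃_k = (−s_k + s_ℓ + s_m)/(s_ℓ s_m) satisfies (s̃)̃ = s and ρ(s̃) = −ρ(s) (whenever the relevant coordinates are nonzero). -/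
/-- Properties of `ρ(s)_k = (s_ℓ − s_m)/s_k`: the product identity, the
projective rigidity, and the involution `s ↦ s̃`. -/
theorem stmt_9 (s1 s2 s3 : ℝ) (h1 : s1 ≠ 0) (h2 : s2 ≠ 0) (h3 : s3 ≠ 0) :
    ((1 + (s2 - s3) / s1) * (1 + (s3 - s1) / s2) * (1 + (s1 - s2) / s3)
      = (1 - (s2 - s3) / s1) * (1 - (s3 - s1) / s2) * (1 - (s1 - s2) / s3)) ∧
    (∀ s1' s2' s3' : ℝ, s1' ≠ 0 → s2' ≠ 0 → s3' ≠ 0 →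
      (s2' - s3') / s1' = (s2 - s3) / s1 →
      (s3' - s1') / s2' = (s3 - s1) / s2 →
      (s1' - s2') / s3' = (s1 - s2) / s3 →
      ∃ l : ℝ, l ≠ 0 ∧ s1' = l * s1 ∧ s2' = l * s2 ∧ s3' = l * s3) ∧
    (∀ t1 t2 t3 : ℝ,
      t1 = (-s1 + s2 + s3) / (s2 * s3) →
      t2 = (-s2 + s3 + s1) / (s3 * s1) →
      t3 = (-s3 + s1 + s2) / (s1 * s2) →
      t1 ≠ 0 → t2 ≠ 0 → t3 ≠ 0 →
      ((-t1 + t2 + t3) / (t2 * t3) = s1 ∧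
       (-t2 + t3 + t1) / (t3 * t1) = s2 ∧
       (-t3 + t1 + t2) / (t1 * t2) = s3 ∧
       (t2 - t3) / t1 = -((s2 - s3) / s1) ∧
       (t3 - t1) / t2 = -((s3 - s1) / s2) ∧
       (t1 - t2) / t3 = -((s1 - s2) / s3))) := by
  refine ⟨?_, ?_, ?_⟩
  · field_simp
    ring
  · intro a b c ha hb hc e1 e2 e3
    rw [div_eq_div_iff (by assumption) (by assumption)] at e1 e2 e3
    refine ⟨a / s1, div_ne_zero ha h1, ?_, ?_, ?_⟩
    · field_simp
    · field_simp
      linarith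
    · field_simp
      linarith
  · intro t1 t2 t3 e1 e2 e3 n1 n2 n3
    have m1 : -s1 + s2 + s3 ≠ 0 := by
      intro h; apply n1; rw [e1, h, zero_div]
    have m2 : -s2 + s3 + s1 ≠ 0 := by
      intro h; apply n2; rw [e2, h, zero_div]
    have m3 : -s3 + s1 + s2 ≠ 0 := by
      intro h; apply n3; rw [e3, h, zero_div]
    refine ⟨?_, ?_, ?_, ?_, ?_, ?_⟩
    · rw [div_eq_iff (mul_ne_zero n2 n3), e1, e2, e3]
      field_simp
      ring
    · rw [div_eq_iff (mul_ne_zero n3 n1), e1, e2, e3]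
      field_simp
      ring
    · rw [div_eq_iff (mul_ne_zero n1 n2), e1, e2, e3]
      field_simp
      ring
    · rw [div_eq_iff n1, e1, e2, e3]
      field_simp
      ring
    · rw [div_eq_iff n2, e1, e2, e3]
      field_simp
      ring
    · rw [div_eq_iff n3, e1, e2, e3]
      field_simp
      ring
end

section
/- Let t₁, t₂, t₃ be real numbers and set s_k = 1 + t_ℓ t_m for each cyclic permutation (k,ℓ,m) of (1,2,3); assume s₁ s₂ s₃ ≠ 0. Set X' = (1 + t₁²)/(s₂ s₃) and Y' = −t₁ (t₃ − t₁)(t₂ − t₁)/(s₂ s₃). Then: (i) the point (X', −Y') lies on the elliptic curve Y² = (X s₁ − 1)(X s₂ − 1)(X s₃ − 1), i.e. (Y')² = (X' s₁ − 1)(X' s₂ − 1)(X' s₃ − 1); and (ii) the three points (1, t₁ t₂ t₃), (X', −Y') and (1/s₁, 0) of the plane are collinear, i.e. the determinant of the 3×3 matrix with rows (1, t₁t₂t₃, 1), (X', −Y', 1), (1/s₁, 0, 1) vanishes. -/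
/-- The point `(X', −Y')` associated to `k₁ ∈ W` lies on the elliptic curve
`Y² = ∏ (X s_j − 1)` and is collinear with `(1, t₁t₂t₃)` and `(1/s₁, 0)`. -/
theorem stmt_11 (t1 t2 t3 s1 s2 s3 X' Y' : ℝ)
    (hs1 : s1 = 1 + t2 * t3) (hs2 : s2 = 1 + t3 * t1) (hs3 : s3 = 1 + t1 * t2)
    (hne : s1 * s2 * s3 ≠ 0)
    (hX : X' = (1 + t1 ^ 2) / (s2 * s3))
    (hY : Y' = -(t1 * (t3 - t1) * (t2 - t1)) / (s2 * s3)) :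
    Y' ^ 2 = (X' * s1 - 1) * (X' * s2 - 1) * (X' * s3 - 1) ∧
    Matrix.det !![1, t1 * t2 * t3, 1; X', -Y', 1; 1 / s1, 0, 1] = 0 := by
  have h1 : s1 ≠ 0 := by rintro h; simp [h] at hne
  have h2 : s2 ≠ 0 := by rintro h; simp [h] at hne
  have h3 : s3 ≠ 0 := by rintro h; simp [h] at hne
  have e1 : X' * s1 - 1 = (t1 - t2) * (t1 - t3) / (s2 * s3) := by
    rw [hX]; field_simp; rw [hs1, hs2, hs3]; ring
  have e2 : X' * s2 - 1 = t1 * (t1 - t2) / s3 := by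
    rw [hX]; field_simp; rw [hs3]; ring
  have e3 : X' * s3 - 1 = t1 * (t1 - t3) / s2 := by
    rw [hX]; field_simp; rw [hs2]; ring
  have eY : Y' = -(t1 * (X' * s1 - 1)) := by
    rw [e1, hY]; ring
  constructor
  · rw [e1, e2, e3, hY]; field_simp; ring
  · have e : t1 * t2 * t3 = t1 * (s1 - 1) := by rw [hs1]; ring
    rw [Matrix.det_fin_three, e, eY]
    simp
    field_simp
    ring
end

section
/- Fix φ = (φ₁,φ₂,φ₃) ∈ ℝ³ and let A_φ be the quotient of the free associative ℂ-algebra on generators x₀, x₁, x₂, x₃ by the two-sided ideal generated by the six elements, for each cyclic permutation (k,ℓ,m) of (1,2,3): sin(φ_k)·(x₀x_k + x_kx₀) − i·cos(φ_ℓ − φ_m)·(x_ℓx_m − x_mx_ℓ) and cos(φ_k)·(x₀x_k − x_kx₀) − i·sin(φ_ℓ − φ_m)·(x_ℓx_m + x_mx_ℓ). Then the images in A_φ of Q₁ = x₀² + x₁² + x₂² + x₃² and of Q₂ = (1/2)·Σ_{k=1}^{3} sin(2φ_k)·cos(−φ_k + φ_ℓ + φ_m)·x_k² are central, i.e. commute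 with every element of A_φ. -/
/-- The four generators `x₀, x₁, x₂, x₃` of the free algebra. -/
noncomputable def x12 : Fin 4 → FreeAlgebra ℂ (Fin 4) := fun i => FreeAlgebra.ι ℂ i

/-- The relations of `C_alg(ℝ⁴_φ)`: for each cyclic permutation `(k,ℓ,m)` of
`(1,2,3)`, `sin φ_k (x₀x_k + x_kx₀) = i cos(φ_ℓ−φ_m)(x_ℓx_m − x_mx_ℓ)` and
`cos φ_k (x₀x_k − x_kx₀) = i sin(φ_ℓ−φ_m)(x_ℓx_m + x_mx_ℓ)`. -/
def rel12 (φ1 φ2 φ3 : ℝ) :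
    FreeAlgebra ℂ (Fin 4) → FreeAlgebra ℂ (Fin 4) → Prop := fun a b =>
  b = 0 ∧
  (a = (Real.sin φ1 : ℂ) • (x12 0 * x12 1 + x12 1 * x12 0)
        - (Complex.I * (Real.cos (φ2 - φ3) : ℂ)) • (x12 2 * x12 3 - x12 3 * x12 2) ∨
   a = (Real.sin φ2 : ℂ) • (x12 0 * x12 2 + x12 2 * x12 0)
        - (Complex.I * (Real.cos (φ3 - φ1) : ℂ)) • (x12 3 * x12 1 - x12 1 * x12 3) ∨
   a = (Real.sin φ3 : ℂ) • (x12 0 * x12 3 + x12 3 * x12 0)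
        - (Complex.I * (Real.cos (φ1 - φ2) : ℂ)) • (x12 1 * x12 2 - x12 2 * x12 1) ∨
   a = (Real.cos φ1 : ℂ) • (x12 0 * x12 1 - x12 1 * x12 0)
        - (Complex.I * (Real.sin (φ2 - φ3) : ℂ)) • (x12 2 * x12 3 + x12 3 * x12 2) ∨
   a = (Real.cos φ2 : ℂ) • (x12 0 * x12 2 - x12 2 * x12 0)
        - (Complex.I * (Real.sin (φ3 - φ1) : ℂ)) • (x12 3 * x12 1 + x12 1 * x12 3) ∨
   a = (Real.cos φ3 : ℂ) • (x12 0 * x12 3 - x12 3 * x12 0)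
        - (Complex.I * (Real.sin (φ1 - φ2) : ℂ)) • (x12 1 * x12 2 + x12 2 * x12 1))

set_option linter.unusedVariables false in
theorem aux12_all {B : Type*} [Ring B] [Algebra ℂ B] (x0 k l m : B)
    (sk ck sl cl sm cm i : ℂ) (hi : i * i = -1)
    (hk : sk ^ 2 + ck ^ 2 = 1) (hl : sl ^ 2 + cl ^ 2 = 1) (hm : sm ^ 2 + cm ^ 2 = 1)
    (R1 R2 R3 R4 R5 R6 : B)
    (e1 : sk • (x0 * k + k * x0) - (i * (cl * cm + sl * sm)) • (l * m - m * l) = R1)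
    (e2 : sl • (x0 * l + l * x0) - (i * (cm * ck + sm * sk)) • (m * k - k * m) = R2)
    (e3 : sm • (x0 * m + m * x0) - (i * (ck * cl + sk * sl)) • (k * l - l * k) = R3)
    (e4 : ck • (x0 * k - k * x0) - (i * (sl * cm - cl * sm)) • (l * m + m * l) = R4)
    (e5 : cl • (x0 * l - l * x0) - (i * (sm * ck - cm * sk)) • (m * k + k * m) = R5)
    (e6 : cm • (x0 * m - m * x0) - (i * (sk * cl - ck * sl)) • (k * l + l * k) = R6)
    (z1 : R1 = 0) (z2 : R2 = 0) (z3 : R3 = 0) (z4 : R4 = 0) (z5 : R5 = 0) (z6 : R6 = 0) :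
    ((k ^ 2 + l ^ 2 + m ^ 2) * x0 = x0 * (k ^ 2 + l ^ 2 + m ^ 2)) ∧
    (((sk * ck * (ck * (cl * cm - sl * sm) + sk * (sl * cm + cl * sm))) • k ^ 2 + (sl * cl * (cl * (cm * ck - sm * sk)
      + sl * (sm * ck + cm * sk))) • l ^ 2 + (sm * cm * (cm * (ck * cl - sk * sl) + sm * (sk * cl + ck * sl))) • m ^ 2) * x0 = x0 * ((sk * ck * (ck * (cl * cm - sl * sm)
      + sk * (sl * cm + cl * sm))) • k ^ 2 + (sl * cl * (cl * (cm * ck - sm * sk) + sl * (sm * ck + cm * sk))) • l ^ 2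
      + (sm * cm * (cm * (ck * cl - sk * sl) + sm * (sk * cl + ck * sl))) • m ^ 2)) ∧
    ((x0 ^ 2 + l ^ 2 + m ^ 2) * k = k * (x0 ^ 2 + l ^ 2 + m ^ 2)) ∧
    (((sl * cl * (cl * (cm * ck - sm * sk) + sl * (sm * ck + cm * sk))) • l ^ 2 + (sm * cm * (cm * (ck * cl - sk * sl)
      + sm * (sk * cl + ck * sl))) • m ^ 2) * k = k * ((sl * cl * (cl * (cm * ck - sm * sk) + sl * (sm * ck
      + cm * sk))) • l ^ 2 + (sm * cm * (cm * (ck * cl - sk * sl) + sm * (sk * cl + ck * sl))) • m ^ 2)) := by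
  refine ⟨?_, ?_, ?_, ?_⟩ <;> rw [← sub_eq_zero]
  · trans sk • (k * R1 - R1 * k) - ck • (k * R4 + R4 * k) + sl • (l * R2 - R2 * l) - cl • (l * R5
      + R5 * l) + sm • (m * R3 - R3 * m) - cm • (m * R6 + R6 * m)
    · subst e1 e2 e3 e4 e5 e6
      simp only [mul_add, add_mul, mul_sub, sub_mul, smul_mul_assoc, mul_smul_comm, mul_assoc, pow_two]
      match_scalars <;> grind
    · simp [z1, z2, z3, z4, z5, z6]
  · trans ((ck * (cl * cm - sl * sm) + sk * (sl * cm + cl * sm)) / 2) • (ck • (k * R1 - R1 * k) - sk • (k * R4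
      + R4 * k)) + ((cl * (cm * ck - sm * sk) + sl * (sm * ck + cm * sk)) / 2) • (cl • (l * R2 - R2 * l) - sl • (l * R5
      + R5 * l)) + ((cm * (ck * cl - sk * sl) + sm * (sk * cl + ck * sl)) / 2) • (cm • (m * R3 - R3 * m) - sm • (m * R6
      + R6 * m))
    · subst e1 e2 e3 e4 e5 e6
      simp only [mul_add, add_mul, mul_sub, sub_mul, smul_mul_assoc, mul_smul_comm, mul_assoc, pow_two]
      match_scalars <;> grind
    · simp [z1, z2, z3, z4, z5, z6]
  · trans sk • (x0 * R1 - R1 * x0) + ck • (x0 * R4 + R4 * x0) + (i * (cm * ck + sm * sk)) • (m * R2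
      + R2 * m) + (i * (sm * ck - cm * sk)) • (m * R5 - R5 * m) + (-i * (ck * cl + sk * sl)) • (l * R3
      + R3 * l) + (i * (sk * cl - ck * sl)) • (l * R6 - R6 * l)
    · subst e1 e2 e3 e4 e5 e6
      simp only [mul_add, add_mul, mul_sub, sub_mul, smul_mul_assoc, mul_smul_comm, mul_assoc, pow_two]
      match_scalars <;> grind
    · simp [z1, z2, z3, z4, z5, z6]
  · trans (i * sm * cl * cm) • (m * R2 + R2 * m) + (i * sm * sl * cm) • (m * R5 - R5 * m) + (-i * cm * cl * sl) • (l * R3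
      + R3 * l) + (-i * sm * sl * cl) • (l * R6 - R6 * l)
    · subst e1 e2 e3 e4 e5 e6
      simp only [mul_add, add_mul, mul_sub, sub_mul, smul_mul_assoc, mul_smul_comm, mul_assoc, pow_two]
      match_scalars <;> grind
    · simp [z1, z2, z3, z4, z5, z6]

theorem aux12_sum {B : Type*} [Ring B] [Algebra ℂ B] {a b x : B} (c : ℂ) (e : a * x = x * a)
    (h : b = a + c • x ^ 2) : Commute b x := by
  rw [h]
  exact Commute.add_left e (((Commute.refl x).pow_left 2).smul_left c)


theorem aux12_gen {r : FreeAlgebra ℂ (Fin 4) → FreeAlgebra ℂ (Fin 4) → Prop} (z : RingQuot r)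
    (h : ∀ j, Commute z (RingQuot.mkAlgHom ℂ r (x12 j))) (y : RingQuot r) : Commute z y := by
  obtain ⟨a, rfl⟩ := RingQuot.mkAlgHom_surjective ℂ r y
  induction a using FreeAlgebra.induction with
  | grade0 c => rw [AlgHom.commutes]; exact (Algebra.commutes c z).symm
  | grade1 j => exact h j
  | mul a b ha hb => rw [map_mul]; exact ha.mul_right hb
  | add a b ha hb => rw [map_add]; exact ha.add_right hb

/-- The images of `Q₁ = Σ x_μ²` and
`Q₂ = ½ Σ sin(2φ_k) cos(−φ_k+φ_ℓ+φ_m) x_k²` are central in `C_alg(ℝ⁴_φ)`. -/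
theorem stmt_12 (φ1 φ2 φ3 : ℝ) :
    (∀ y : RingQuot (rel12 φ1 φ2 φ3),
      Commute (RingQuot.mkAlgHom ℂ (rel12 φ1 φ2 φ3)
        (x12 0 ^ 2 + x12 1 ^ 2 + x12 2 ^ 2 + x12 3 ^ 2)) y) ∧
    (∀ y : RingQuot (rel12 φ1 φ2 φ3),
      Commute (RingQuot.mkAlgHom ℂ (rel12 φ1 φ2 φ3)
        (((Real.sin (2 * φ1) * Real.cos (-φ1 + φ2 + φ3) / 2 : ℝ) : ℂ) • x12 1 ^ 2
          + ((Real.sin (2 * φ2) * Real.cos (-φ2 + φ3 + φ1) / 2 : ℝ) : ℂ) • x12 2 ^ 2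
          + ((Real.sin (2 * φ3) * Real.cos (-φ3 + φ1 + φ2) / 2 : ℝ) : ℂ) • x12 3 ^ 2)) y) := by
  set X : Fin 4 → RingQuot (rel12 φ1 φ2 φ3) :=
    fun j => RingQuot.mkAlgHom ℂ (rel12 φ1 φ2 φ3) (x12 j) with hX
  have hX' : ∀ j, RingQuot.mkAlgHom ℂ (rel12 φ1 φ2 φ3) (x12 j) = X j := fun j => rfl
  have hrel : ∀ a, rel12 φ1 φ2 φ3 a 0 → RingQuot.mkAlgHom ℂ (rel12 φ1 φ2 φ3) a = 0 := by
    intro a ha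
    rw [RingQuot.mkAlgHom_rel ℂ ha, map_zero]
  obtain ⟨s1, hs1⟩ : ∃ s : ℂ, s = (Real.sin φ1 : ℂ) := ⟨_, rfl⟩
  obtain ⟨c1, hc1⟩ : ∃ c : ℂ, c = (Real.cos φ1 : ℂ) := ⟨_, rfl⟩
  have h1 : s1 ^ 2 + c1 ^ 2 = 1 := by
    rw [hs1, hc1]; exact_mod_cast Real.sin_sq_add_cos_sq φ1
  obtain ⟨s2, hs2⟩ : ∃ s : ℂ, s = (Real.sin φ2 : ℂ) := ⟨_, rfl⟩
  obtain ⟨c2, hc2⟩ : ∃ c : ℂ, c = (Real.cos φ2 : ℂ) := ⟨_, rfl⟩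
  have h2 : s2 ^ 2 + c2 ^ 2 = 1 := by
    rw [hs2, hc2]; exact_mod_cast Real.sin_sq_add_cos_sq φ2
  obtain ⟨s3, hs3⟩ : ∃ s : ℂ, s = (Real.sin φ3 : ℂ) := ⟨_, rfl⟩
  obtain ⟨c3, hc3⟩ : ∃ c : ℂ, c = (Real.cos φ3 : ℂ) := ⟨_, rfl⟩
  have h3 : s3 ^ 2 + c3 ^ 2 = 1 := by
    rw [hs3, hc3]; exact_mod_cast Real.sin_sq_add_cos_sq φ3
  have r1 := hrel _ ⟨rfl, Or.inl rfl⟩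
  have r2 := hrel _ ⟨rfl, Or.inr (Or.inl rfl)⟩
  have r3 := hrel _ ⟨rfl, Or.inr (Or.inr (Or.inl rfl))⟩
  have r4 := hrel _ ⟨rfl, Or.inr (Or.inr (Or.inr (Or.inl rfl)))⟩
  have r5 := hrel _ ⟨rfl, Or.inr (Or.inr (Or.inr (Or.inr (Or.inl rfl))))⟩
  have r6 := hrel _ ⟨rfl, Or.inr (Or.inr (Or.inr (Or.inr (Or.inr (rfl)))))⟩
  simp only [map_sub, map_add, map_mul, map_smul, hX', Real.cos_sub, Real.sin_sub,
      Complex.ofReal_add, Complex.ofReal_sub, Complex.ofReal_mul, ← hs1, ← hs2, ← hs3,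
      ← hc1, ← hc2, ← hc3] at r1 r2 r3 r4 r5 r6
  have q1 : ((Real.sin (2 * φ1) * Real.cos (-φ1 + φ2 + φ3) / 2 : ℝ) : ℂ) = s1 * c1 * (c1 * (c2 * c3 - s2 * s3) + s1 * (s2 * c3 + c2 * s3)) := by
    have : -φ1 + φ2 + φ3 = (φ2 + φ3) - φ1 := by ring
    rw [this, Real.sin_two_mul, Real.cos_sub, Real.cos_add, Real.sin_add, hs1, hs2, hs3, hc1, hc2, hc3]
    push_cast
    ring
  have q2 : ((Real.sin (2 * φ2) * Real.cos (-φ2 + φ3 + φ1) / 2 : ℝ) : ℂ) = s2 * c2 * (c2 * (c3 * c1 - s3 * s1) + s2 * (s3 * c1 + c3 * s1)) := by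
    have : -φ2 + φ3 + φ1 = (φ3 + φ1) - φ2 := by ring
    rw [this, Real.sin_two_mul, Real.cos_sub, Real.cos_add, Real.sin_add, hs1, hs2, hs3, hc1, hc2, hc3]
    push_cast
    ring
  have q3 : ((Real.sin (2 * φ3) * Real.cos (-φ3 + φ1 + φ2) / 2 : ℝ) : ℂ) = s3 * c3 * (c3 * (c1 * c2 - s1 * s2) + s3 * (s1 * c2 + c1 * s2)) := by
    have : -φ3 + φ1 + φ2 = (φ1 + φ2) - φ3 := by ring
    rw [this, Real.sin_two_mul, Real.cos_sub, Real.cos_add, Real.sin_add, hs1, hs2, hs3, hc1, hc2, hc3]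
    push_cast
    ring
  obtain ⟨A1, B1, C1, D1⟩ := aux12_all (X 0) (X 1) (X 2) (X 3) s1 c1 s2 c2 s3 c3 _ Complex.I_mul_I h1 h2 h3
    _ _ _ _ _ _ rfl rfl rfl rfl rfl rfl r1 r2 r3 r4 r5 r6
  obtain ⟨A2, B2, C2, D2⟩ := aux12_all (X 0) (X 2) (X 3) (X 1) s2 c2 s3 c3 s1 c1 _ Complex.I_mul_I h2 h3 h1
    _ _ _ _ _ _ rfl rfl rfl rfl rfl rfl r2 r3 r1 r5 r6 r4
  obtain ⟨A3, B3, C3, D3⟩ := aux12_all (X 0) (X 3) (X 1) (X 2) s3 c3 s1 c1 s2 c2 _ Complex.I_mul_I h3 h1 h2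
    _ _ _ _ _ _ rfl rfl rfl rfl rfl rfl r3 r1 r2 r6 r4 r5
  constructor
  · apply aux12_gen
    intro j
    simp only [map_add, map_pow, hX']
    fin_cases j
    · exact aux12_sum (x := X 0) 1 A1 (by rw [one_smul]; abel)
    · exact aux12_sum (x := X 1) 1 C1 (by rw [one_smul]; abel)
    · exact aux12_sum (x := X 2) 1 C2 (by rw [one_smul]; abel)
    · exact aux12_sum (x := X 3) 1 C3 (by rw [one_smul])
  · apply aux12_gen
    intro j
    rw [q1, q2, q3]
    simp only [map_add, map_pow, map_smul, hX']
    fin_cases j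
    · exact B1
    · exact aux12_sum (x := X 1) _ D1 ((add_assoc _ _ _).trans (add_comm _ _))
    · exact aux12_sum (x := X 2) _ D2 ((add_right_comm _ _ _).trans (congrArg (· + _) (add_comm _ _)))
    · exact aux12_sum (x := X 3) _ D3 rfl
end

section
/- Let S be the quotient of the free associative ℂ-algebra on generators S₀, S₁, S₂, S₃ by the two-sided ideal generated by the three elements S_ℓ S_m − S_m S_ℓ − i·(S₀ S_k + S_k S₀), one for each cyclic permutation (k,ℓ,m) of (1,2,3). Then the image in S of C₁ = S₀² + S₁² + S₂² + S₃² is central, i.e. commutes with every element of S. -/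
/-- The four generators `S₀, S₁, S₂, S₃` of the free algebra. -/
noncomputable def s13 : Fin 4 → FreeAlgebra ℂ (Fin 4) := fun i => FreeAlgebra.ι ℂ i

/-- The "self-duality" half of the Sklyanin relations: for each cyclic
permutation `(k,ℓ,m)` of `(1,2,3)`, `[S_ℓ, S_m] = i [S₀, S_k]₊`. -/
def rel13 : FreeAlgebra ℂ (Fin 4) → FreeAlgebra ℂ (Fin 4) → Prop := fun a b =>
  b = 0 ∧
  (a = s13 2 * s13 3 - s13 3 * s13 2 - Complex.I • (s13 0 * s13 1 + s13 1 * s13 0) ∨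
   a = s13 3 * s13 1 - s13 1 * s13 3 - Complex.I • (s13 0 * s13 2 + s13 2 * s13 0) ∨
   a = s13 1 * s13 2 - s13 2 * s13 1 - Complex.I • (s13 0 * s13 3 + s13 3 * s13 0))

theorem aux13_zero {A : Type*} [Ring A] [Algebra ℂ A] (a x y z : A)
    (h1 : y * z - z * y - Complex.I • (a * x + x * a) = 0)
    (h2 : z * x - x * z - Complex.I • (a * y + y * a) = 0)
    (h3 : x * y - y * x - Complex.I • (a * z + z * a) = 0) :
    Commute (a ^ 2 + x ^ 2 + y ^ 2 + z ^ 2) a := by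
  have e1 := sub_eq_zero.mp h1
  have e2 := sub_eq_zero.mp h2
  have e3 := sub_eq_zero.mp h3
  have key : Complex.I • ((a ^ 2 + x ^ 2 + y ^ 2 + z ^ 2) * a - a * (a ^ 2 + x ^ 2 + y ^ 2 + z ^ 2))
      = (x * (Complex.I • (a * x + x * a)) - (Complex.I • (a * x + x * a)) * x)
      + (y * (Complex.I • (a * y + y * a)) - (Complex.I • (a * y + y * a)) * y)
      + (z * (Complex.I • (a * z + z * a)) - (Complex.I • (a * z + z * a)) * z) := by
    simp only [mul_smul_comm, smul_mul_assoc, ← smul_sub, ← smul_add]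
    congr 1
    noncomm_ring
  rw [← e1, ← e2, ← e3] at key
  have k0 : Complex.I • ((a ^ 2 + x ^ 2 + y ^ 2 + z ^ 2) * a
      - a * (a ^ 2 + x ^ 2 + y ^ 2 + z ^ 2)) = 0 := by
    rw [key]; noncomm_ring
  exact sub_eq_zero.mp ((smul_eq_zero_iff_right Complex.I_ne_zero).mp k0)

theorem aux13_one {A : Type*} [Ring A] [Algebra ℂ A] (a x y z : A)
    (h1 : y * z - z * y - Complex.I • (a * x + x * a) = 0)
    (h2 : z * x - x * z - Complex.I • (a * y + y * a) = 0)
    (h3 : x * y - y * x - Complex.I • (a * z + z * a) = 0) :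
    Commute (a ^ 2 + x ^ 2 + y ^ 2 + z ^ 2) x := by
  have e1 := sub_eq_zero.mp h1
  have e2 := sub_eq_zero.mp h2
  have e3 := sub_eq_zero.mp h3
  have f1 : a * x + x * a = -(Complex.I • (y * z - z * y)) := by
    rw [e1, smul_smul, Complex.I_mul_I, neg_one_smul, neg_neg]
  have key : (a ^ 2 + x ^ 2 + y ^ 2 + z ^ 2) * x - x * (a ^ 2 + x ^ 2 + y ^ 2 + z ^ 2)
      = (a * (a * x + x * a) - (a * x + x * a) * a)
      - (y * (x * y - y * x) + (x * y - y * x) * y)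
      + (z * (z * x - x * z) + (z * x - x * z) * z) := by
    noncomm_ring
  rw [f1, e2, e3] at key
  refine sub_eq_zero.mp (key.trans ?_)
  simp only [mul_smul_comm, smul_mul_assoc, ← smul_sub, ← smul_add, ← smul_neg, mul_neg, neg_mul]
  rw [← smul_zero Complex.I]
  congr 1
  noncomm_ring

theorem aux13_perm {A : Type*} [Ring A] (a x y z w : A)
    (h : Commute (a + x + y + z) w) : Commute (a + z + x + y) w := by
  have e : a + z + x + y = a + x + y + z := by abel
  rw [e]; exact h

/-- The image of `C₁ = S₀² + S₁² + S₂² + S₃²` is central in the quotient. -/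
theorem stmt_13 :
    ∀ y : RingQuot rel13,
      Commute (RingQuot.mkAlgHom ℂ rel13
        (s13 0 ^ 2 + s13 1 ^ 2 + s13 2 ^ 2 + s13 3 ^ 2)) y := by
  have r1 := RingQuot.mkAlgHom_rel ℂ (s := rel13) ⟨rfl, Or.inl rfl⟩
  have r2 := RingQuot.mkAlgHom_rel ℂ (s := rel13) ⟨rfl, Or.inr (Or.inl rfl)⟩
  have r3 := RingQuot.mkAlgHom_rel ℂ (s := rel13) ⟨rfl, Or.inr (Or.inr rfl)⟩
  simp only [map_sub, map_mul, map_smul, map_add, map_zero] at r1 r2 r3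
  intro y
  obtain ⟨w, rfl⟩ := RingQuot.mkAlgHom_surjective ℂ rel13 y
  simp only [map_add, map_pow]
  induction w using FreeAlgebra.induction with
  | grade0 r =>
    rw [AlgHom.commutes]
    exact (Algebra.commutes _ _).symm
  | grade1 i =>
    change Commute _ (RingQuot.mkAlgHom ℂ rel13 (s13 i))
    fin_cases i
    · exact aux13_zero _ _ _ _ r1 r2 r3
    · exact aux13_one _ _ _ _ r1 r2 r3
    · have := aux13_one _ _ _ _ r2 r3 r1
      exact aux13_perm _ _ _ _ _ this
    · have := aux13_one _ _ _ _ r3 r1 r2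
      exact aux13_perm _ _ _ _ _ (aux13_perm _ _ _ _ _ this)
  | mul a b ha hb => rw [map_mul]; exact ha.mul_right hb
  | add a b ha hb => rw [map_add]; exact ha.add_right hb
end

section
/- Let a, b, c be nonzero complex numbers and set J₁₂ = (a−b)/c, J₂₃ = (b−c)/a, J₃₁ = (c−a)/b. Let A be the quotient of the free associative ℂ-algebra on generators Y₀, Y₁, Y₂, Y₃ by the two-sided ideal generated by the six elements, for each cyclic permutation (k,ℓ,m) of (1,2,3): Y₀Y_k − Y_kY₀ − (Y_ℓY_m + Y_mY_ℓ) and Y_ℓY_m − Y_mY_ℓ + J_{ℓm}·(Y₀Y_k + Y_kY₀). Then for each cyclic permutation (k,ℓ,m) of (1,2,3) the image in A of the quadratic element Q_m = J_{kℓ}·(Y₀² + Y_m²) + Y_k² − Y_ℓ² is central, i.e. commutes with every element of A. -/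
/-- The four generators `Y₀, Y₁, Y₂, Y₃` of the free algebra. -/
noncomputable def y14 : Fin 4 → FreeAlgebra ℂ (Fin 4) := fun i => FreeAlgebra.ι ℂ i

/-- The relations of `A_u`: for each cyclic permutation `(k,ℓ,m)` of `(1,2,3)`,
`[Y₀, Y_k]₋ = [Y_ℓ, Y_m]₊` and `[Y_ℓ, Y_m]₋ = −J_{ℓm} [Y₀, Y_k]₊`, where
`J₂₃ = (b−c)/a`, `J₃₁ = (c−a)/b`, `J₁₂ = (a−b)/c`. -/
def rel14 (a b c : ℂ) : FreeAlgebra ℂ (Fin 4) → FreeAlgebra ℂ (Fin 4) → Prop := fun p q =>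
  q = 0 ∧
  (p = y14 0 * y14 1 - y14 1 * y14 0 - (y14 2 * y14 3 + y14 3 * y14 2) ∨
   p = y14 0 * y14 2 - y14 2 * y14 0 - (y14 3 * y14 1 + y14 1 * y14 3) ∨
   p = y14 0 * y14 3 - y14 3 * y14 0 - (y14 1 * y14 2 + y14 2 * y14 1) ∨
   p = y14 2 * y14 3 - y14 3 * y14 2 + ((b - c) / a) • (y14 0 * y14 1 + y14 1 * y14 0) ∨
   p = y14 3 * y14 1 - y14 1 * y14 3 + ((c - a) / b) • (y14 0 * y14 2 + y14 2 * y14 0) ∨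
   p = y14 1 * y14 2 - y14 2 * y14 1 + ((a - b) / c) • (y14 0 * y14 3 + y14 3 * y14 0))

theorem aux14 {A : Type*} [Ring A] [Algebra ℂ A] (j : ℂ) (w x y z : A)
    (r2 : w * y - y * w - (z * x + x * z) = 0)
    (r3 : w * z - z * w - (x * y + y * x) = 0)
    (s1 : y * z - z * y + j • (w * x + x * w) = 0) :
    Commute (j • (w ^ 2 + x ^ 2) + y ^ 2 - z ^ 2) w ∧
    Commute (j • (w ^ 2 + x ^ 2) + y ^ 2 - z ^ 2) x ∧
    Commute (j • (w ^ 2 + x ^ 2) + y ^ 2 - z ^ 2) y ∧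
    Commute (j • (w ^ 2 + x ^ 2) + y ^ 2 - z ^ 2) z := by
  refine ⟨?_, ?_, ?_, ?_⟩ <;> refine sub_eq_zero.1 ?_
  · trans x * (y * z - z * y + j • (w * x + x * w)) - (y * z - z * y + j • (w * x + x * w)) * x
      - y * (w * y - y * w - (z * x + x * z)) - (w * y - y * w - (z * x + x * z)) * y
      + z * (w * z - z * w - (x * y + y * x)) + (w * z - z * w - (x * y + y * x)) * z
    · simp only [pow_two, mul_add, add_mul, mul_sub, sub_mul, smul_add, mul_smul_comm,
        smul_mul_assoc, mul_assoc]
      module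
    · simp only [r2, r3, s1]; simp
  · trans w * (y * z - z * y + j • (w * x + x * w)) - (y * z - z * y + j • (w * x + x * w)) * w
      + z * (w * y - y * w - (z * x + x * z)) - (w * y - y * w - (z * x + x * z)) * z
      - y * (w * z - z * w - (x * y + y * x)) + (w * z - z * w - (x * y + y * x)) * y
    · simp only [pow_two, mul_add, add_mul, mul_sub, sub_mul, smul_add, mul_smul_comm,
        smul_mul_assoc, mul_assoc]
      module
    · simp only [r2, r3, s1]; simp
  · trans z * (y * z - z * y + j • (w * x + x * w)) + (y * z - z * y + j • (w * x + x * w)) * z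
      + j • (w * (w * y - y * w - (z * x + x * z)) + (w * y - y * w - (z * x + x * z)) * w
      - x * (w * z - z * w - (x * y + y * x)) + (w * z - z * w - (x * y + y * x)) * x)
    · simp only [pow_two, mul_add, add_mul, mul_sub, sub_mul, smul_add, mul_smul_comm,
        smul_mul_assoc, mul_assoc]
      module
    · simp only [r2, r3, s1]; simp
  · trans y * (y * z - z * y + j • (w * x + x * w)) + (y * z - z * y + j • (w * x + x * w)) * y
      + j • (w * (w * z - z * w - (x * y + y * x)) + (w * z - z * w - (x * y + y * x)) * w
      - x * (w * y - y * w - (z * x + x * z)) + (w * y - y * w - (z * x + x * z)) * x)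
    · simp only [pow_two, mul_add, add_mul, mul_sub, sub_mul, smul_add, mul_smul_comm,
        smul_mul_assoc, mul_assoc]
      module
    · simp only [r2, r3, s1]; simp

theorem gen14 (a b c : ℂ) (q : RingQuot (rel14 a b c))
    (h : ∀ i, Commute q (RingQuot.mkAlgHom ℂ (rel14 a b c) (y14 i))) (z) : Commute q z := by
  obtain ⟨t, rfl⟩ := RingQuot.mkAlgHom_surjective ℂ (rel14 a b c) z
  induction t using FreeAlgebra.induction with
  | grade0 r =>
    rw [AlgHom.commutes]
    exact (Algebra.commutes r q).symm
  | grade1 i => exact h i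
  | mul u v hu hv => rw [map_mul]; exact hu.mul_right hv
  | add u v hu hv => rw [map_add]; exact hu.add_right hv

/-- The images of the quadratic elements `Q_m = J_{kℓ}(Y₀² + Y_m²) + Y_k² − Y_ℓ²`
are central in the quotient. -/
theorem stmt_14 (a b c : ℂ) (ha : a ≠ 0) (hb : b ≠ 0) (hc : c ≠ 0) :
    (∀ z : RingQuot (rel14 a b c),
      Commute (RingQuot.mkAlgHom ℂ (rel14 a b c)
        (((b - c) / a) • (y14 0 ^ 2 + y14 1 ^ 2) + y14 2 ^ 2 - y14 3 ^ 2)) z) ∧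
    (∀ z : RingQuot (rel14 a b c),
      Commute (RingQuot.mkAlgHom ℂ (rel14 a b c)
        (((c - a) / b) • (y14 0 ^ 2 + y14 2 ^ 2) + y14 3 ^ 2 - y14 1 ^ 2)) z) ∧
    (∀ z : RingQuot (rel14 a b c),
      Commute (RingQuot.mkAlgHom ℂ (rel14 a b c)
        (((a - b) / c) • (y14 0 ^ 2 + y14 3 ^ 2) + y14 1 ^ 2 - y14 2 ^ 2)) z) := by
  have key : ∀ p, rel14 a b c p 0 → RingQuot.mkAlgHom ℂ (rel14 a b c) p = 0 := fun p hp => by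
    rw [RingQuot.mkAlgHom_rel ℂ hp, map_zero]
  have r1 := key _ ⟨rfl, Or.inl rfl⟩
  have r2 := key _ ⟨rfl, Or.inr (Or.inl rfl)⟩
  have r3 := key _ ⟨rfl, Or.inr (Or.inr (Or.inl rfl))⟩
  have s1 := key _ ⟨rfl, Or.inr (Or.inr (Or.inr (Or.inl rfl)))⟩
  have s2 := key _ ⟨rfl, Or.inr (Or.inr (Or.inr (Or.inr (Or.inl rfl))))⟩
  have s3 := key _ ⟨rfl, Or.inr (Or.inr (Or.inr (Or.inr (Or.inr rfl))))⟩
  simp only [map_add, map_sub, map_mul, map_smul] at r1 r2 r3 s1 s2 s3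
  simp only [map_add, map_sub, map_pow, map_smul]
  refine ⟨gen14 a b c _ ?_, gen14 a b c _ ?_, gen14 a b c _ ?_⟩
  · obtain ⟨h0, h1, h2, h3⟩ := aux14 _ _ _ _ _ r2 r3 s1
    intro i; fin_cases i
    exacts [h0, h1, h2, h3]
  · obtain ⟨h0, h1, h2, h3⟩ := aux14 _ _ _ _ _ r3 r1 s2
    intro i; fin_cases i
    exacts [h0, h3, h1, h2]
  · obtain ⟨h0, h1, h2, h3⟩ := aux14 _ _ _ _ _ r1 r2 s3
    intro i; fin_cases i
    exacts [h0, h2, h3, h1]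
end

section
/- Let τ ∈ ℂ with Im τ > 0 and define the Jacobi theta functions θ₁, θ₂, θ₃, θ₄ (with parameter τ) as in the context. Let η, z ∈ ℂ and assume θ_j(η) ≠ 0 for j = 1,2,3,4. Set Z₀ = θ₁(2z)/θ₁(η), Z₁ = θ₂(2z)/θ₂(η), Z₂ = θ₃(2z)/θ₃(η), Z₃ = θ₄(2z)/θ₄(η). Then (θ₂(η)²/θ₂(0)²)·(Z₀² − Z₁²) = (θ₃(η)²/θ₃(0)²)·(Z₀² − Z₂²) = (θ₄(η)²/θ₄(0)²)·(Z₀² − Z₃²); that is, the point (Z₀,Z₁,Z₂,Z₃) lies on the biquadratic curve (Z₀²−Z₁²)/a = (Z₀²−Z₂²)/b = (Z₀²−Z₃²)/c with a = θ₂(0)²/θ₂(η)², b = θ₃(0)²/θ₃(η)², c = θ₄(0)²/θ₄(η)². -/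
/-- `θ₃(z) = Σ_{n∈ℤ} q^{n²} e^{2πinz}` with `q = exp(πiτ)`. -/
noncomputable def theta3 (τ z : ℂ) : ℂ := jacobiTheta₂ z τ

/-- `θ₄(z) = θ₃(z + 1/2)`. -/
noncomputable def theta4 (τ z : ℂ) : ℂ := jacobiTheta₂ (z + 1 / 2) τ

/-- `θ₂(z) = q^{1/4} e^{πiz} θ₃(z + τ/2)`. -/
noncomputable def theta2 (τ z : ℂ) : ℂ :=
  Complex.exp ((Real.pi : ℂ) * Complex.I * τ / 4) *
    Complex.exp ((Real.pi : ℂ) * Complex.I * z) * jacobiTheta₂ (z + τ / 2) τ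

/-- `θ₁(z) = −i q^{1/4} e^{πiz} θ₃(z + 1/2 + τ/2)`. -/
noncomputable def theta1 (τ z : ℂ) : ℂ :=
  -Complex.I * Complex.exp ((Real.pi : ℂ) * Complex.I * τ / 4) *
    Complex.exp ((Real.pi : ℂ) * Complex.I * z) *
    jacobiTheta₂ (z + 1 / 2 + τ / 2) τ

def parMap : (ℤ × ℤ) ⊕ (ℤ × ℤ) → ℤ × ℤ
  | Sum.inl p => (p.1 + p.2, p.1 - p.2)
  | Sum.inr p => (p.1 + p.2 + 1, p.1 - p.2)

lemma parMap_bij : Function.Bijective parMap := by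
  constructor
  · rintro (⟨a, b⟩ | ⟨a, b⟩) (⟨c, d⟩ | ⟨c, d⟩) h <;> simp only [parMap, Prod.mk.injEq] at h
    · have h1 : a = c := by omega
      have h2 : b = d := by omega
      rw [h1, h2]
    · omega
    · omega
    · have h1 : a = c := by omega
      have h2 : b = d := by omega
      rw [h1, h2]
  · rintro ⟨m, n⟩
    rcases Int.even_or_odd' (m + n) with ⟨k, hk | hk⟩
    · refine ⟨Sum.inl (k, m - k), ?_⟩
      simp only [parMap, Prod.mk.injEq]
      omega
    · refine ⟨Sum.inr (k, k - n), ?_⟩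
      simp only [parMap, Prod.mk.injEq]
      omega

lemma hasSum_mul_gen {f g : ℤ → ℂ} {a b : ℂ} (h1 : HasSum f a) (h2 : HasSum g b) :
    HasSum (fun p : ℤ × ℤ => f p.1 * g p.2) (a * b) := by
  have h3 : Summable (fun p : ℤ × ℤ => f p.1 * g p.2) :=
    summable_mul_of_summable_norm h1.summable.norm h2.summable.norm
  exact HasSum.mul h1 h2 h3

lemma hasSum_mul_c {f : ℤ × ℤ → ℂ} {a : ℂ} (c : ℂ) (h1 : HasSum f a) :
    HasSum (fun p : ℤ × ℤ => c * f p) (c * a) := HasSum.mul_left c h1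

lemma hasSum_mul_theta (x y σ ρ : ℂ) (hσ : 0 < σ.im) (hρ : 0 < ρ.im) :
    HasSum (fun p : ℤ × ℤ => jacobiTheta₂_term p.1 x σ * jacobiTheta₂_term p.2 y ρ)
      (jacobiTheta₂ x σ * jacobiTheta₂ y ρ) := by
  have h1 : HasSum (fun n => jacobiTheta₂_term n x σ) (jacobiTheta₂ x σ) := hasSum_jacobiTheta₂_term x hσ
  have h2 : HasSum (fun n => jacobiTheta₂_term n y ρ) (jacobiTheta₂ y ρ) := hasSum_jacobiTheta₂_term y hρ
  generalize jacobiTheta₂ x σ = a at *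
  generalize jacobiTheta₂ y ρ = b at *
  have h := hasSum_mul_gen h1 h2
  exact h

lemma theta_mul (x y τ : ℂ) (hτ : 0 < τ.im) :
    jacobiTheta₂ x τ * jacobiTheta₂ y τ =
      jacobiTheta₂ (x + y) (2 * τ) * jacobiTheta₂ (x - y) (2 * τ) +
      Complex.exp (2 * Real.pi * Complex.I * x + Real.pi * Complex.I * τ) *
        (jacobiTheta₂ (x + y + τ) (2 * τ) * jacobiTheta₂ (x - y + τ) (2 * τ)) := by
  have h2τ : 0 < (2 * τ).im := by simpa using hτ
  have h0 := hasSum_mul_theta x y τ τ hτ hτ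
  have h1 := hasSum_mul_theta (x + y) (x - y) _ _ h2τ h2τ
  have h2 := hasSum_mul_c (Complex.exp (2 * Real.pi * Complex.I * x + Real.pi * Complex.I * τ))
    (hasSum_mul_theta (x + y + τ) (x - y + τ) _ _ h2τ h2τ)
  rw [← (Equiv.ofBijective parMap parMap_bij).hasSum_iff] at h0
  refine h0.unique (HasSum.sum ?_ ?_)
  · convert h1 using 1
    funext p
    obtain ⟨k, l⟩ := p
    simp only [Function.comp, Equiv.ofBijective_apply, parMap, jacobiTheta₂_term,
      ← Complex.exp_add]
    congr 1
    push_cast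
    ring
  · convert h2 using 1
    funext p
    obtain ⟨k, l⟩ := p
    simp only [Function.comp, Equiv.ofBijective_apply, parMap, jacobiTheta₂_term,
      ← Complex.exp_add]
    congr 1
    push_cast
    ring

lemma theta_half (τ : ℂ) : jacobiTheta₂ (1 / 2) τ = jacobiTheta (τ + 1) := by
  rw [jacobiTheta_eq_jacobiTheta₂]
  refine tsum_congr fun n => ?_
  rw [jacobiTheta₂_term, jacobiTheta₂_term, Complex.exp_eq_exp_iff_exists_int]
  obtain ⟨k, hk⟩ := (Int.even_mul_succ_self (n - 1))
  have hk' : ((n : ℂ) - 1) * n = k + k := by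
    have := congrArg (Int.cast : ℤ → ℂ) hk
    push_cast at this
    linear_combination this
  refine ⟨-k, ?_⟩
  push_cast
  linear_combination (-(Real.pi : ℂ) * Complex.I) * hk'

lemma theta_agm (τ : ℂ) (hτ : 0 < τ.im) :
    jacobiTheta₂ 0 τ * jacobiTheta₂ (1 / 2) τ = jacobiTheta₂ (1 / 2) (2 * τ) ^ 2 := by
  have e1 : jacobiTheta₂ (0 - 1 / 2) (2 * τ) = jacobiTheta₂ (1 / 2) (2 * τ) := by
    rw [zero_sub, jacobiTheta₂_neg_left]
  have e2 : jacobiTheta₂ (0 - 1 / 2 + τ) (2 * τ) = 0 := by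
    have a1 := jacobiTheta₂_add_left (0 - 1 / 2 + τ) (2 * τ)
    have a2 := jacobiTheta₂_add_left' (-(1 / 2 + τ)) (2 * τ)
    rw [jacobiTheta₂_neg_left] at a2
    have e3 : -(Real.pi : ℂ) * Complex.I * (2 * τ + 2 * (-(1 / 2 + τ))) = Real.pi * Complex.I := by
      ring
    rw [e3, Complex.exp_pi_mul_I] at a2
    have e4 : (0 - 1 / 2 + τ + 1 : ℂ) = 1 / 2 + τ := by ring
    have e5 : (-(1 / 2 + τ) + 2 * τ : ℂ) = 0 - 1 / 2 + τ := by ring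
    rw [e4] at a1
    rw [e5, a1] at a2
    linear_combination a2 / 2
  rw [theta_mul 0 (1 / 2) τ hτ, e1, e2, zero_add]
  ring

lemma theta4_ne (τ : ℂ) (hτ : 0 < τ.im) : jacobiTheta₂ (1 / 2) τ ≠ 0 := by
  intro h
  have key : ∀ n : ℕ, 0 < ((2 : ℂ) ^ n * τ).im ∧ jacobiTheta₂ (1 / 2) (2 ^ n * τ) = 0 := by
    intro n
    induction n with
    | zero => simpa using ⟨hτ, by simpa using h⟩
    | succ n ih =>
      have e : (2 : ℂ) ^ (n + 1) * τ = 2 * (2 ^ n * τ) := by ring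
      have h1 := theta_agm _ ih.1
      rw [ih.2, mul_zero] at h1
      rw [e]
      exact ⟨by simpa using ih.1, pow_eq_zero_iff (two_ne_zero) |>.1 h1.symm⟩
  have him : ∀ n : ℕ, ((2 : ℂ) ^ n * τ + 1).im = 2 ^ n * τ.im := by
    intro n
    have : ((2 : ℂ) ^ n) = (((2 : ℝ) ^ n : ℝ) : ℂ) := by push_cast; rfl
    rw [Complex.add_im, this, Complex.im_ofReal_mul]
    simp
  obtain ⟨n, hn⟩ := pow_unbounded_of_one_lt (2 / τ.im) (one_lt_two (α := ℝ))
  rw [div_lt_iff₀ hτ, ← him] at hn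
  have h1 := norm_jacobiTheta_sub_one_le (τ := (2 : ℂ) ^ n * τ + 1) (by linarith)
  rw [← theta_half, (key n).2] at h1
  set t := ((2 : ℂ) ^ n * τ + 1).im
  have hpi := Real.pi_gt_three
  have hE : Real.exp (-Real.pi * t) < 1 / 3 := by
    rw [neg_mul, Real.exp_neg, inv_lt_comm₀ (Real.exp_pos _) (by norm_num)]
    have := Real.add_one_le_exp (Real.pi * t)
    nlinarith
  have hp := Real.exp_pos (-Real.pi * t)
  simp only [zero_sub, norm_neg, norm_one] at h1
  rw [div_mul_eq_mul_div, le_div_iff₀ (by linarith)] at h1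
  linarith

lemma theta3_ne (τ : ℂ) (hτ : 0 < τ.im) : jacobiTheta₂ 0 τ ≠ 0 := by
  intro h
  have h1 := theta_agm τ hτ
  rw [h, zero_mul] at h1
  exact theta4_ne (2 * τ) (by simpa using hτ) (pow_eq_zero_iff two_ne_zero |>.1 h1.symm)

lemma theta2_ne (τ : ℂ) (hτ : 0 < τ.im) : jacobiTheta₂ (τ / 2) τ ≠ 0 := by
  have h0 : τ ≠ 0 := by
    rintro rfl
    simp at hτ
  rw [jacobiTheta₂_functional_equation]
  refine mul_ne_zero (mul_ne_zero (one_div_ne_zero ?_) (Complex.exp_ne_zero _)) ?_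
  · rw [Ne, Complex.cpow_eq_zero_iff]
    simp [h0]
  · have : τ / 2 / τ = 1 / 2 := by field_simp
    rw [this]
    apply theta4_ne
    rw [neg_div, Complex.neg_im, one_div, Complex.inv_im, neg_div, neg_neg]
    exact div_pos hτ (Complex.normSq_pos.2 h0)

lemma big_per (u τ : ℂ) : jacobiTheta₂ (2 * u + 2 * τ) (2 * τ) =
    Complex.exp (-(2 * Real.pi * Complex.I * τ + 4 * Real.pi * Complex.I * u)) *
      jacobiTheta₂ (2 * u) (2 * τ) := by
  rw [jacobiTheta₂_add_left']
  congr 2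
  ring

/-- Squares of theta functions in terms of theta functions with doubled parameter. -/
lemma theta_squares (τ : ℂ) (hτ : 0 < τ.im) : ∃ (A B : ℂ → ℂ), ∀ u,
    theta3 τ u ^ 2 = A u * A 0 + B u * B 0 ∧
    theta4 τ u ^ 2 = A u * A 0 - B u * B 0 ∧
    theta2 τ u ^ 2 = B u * A 0 + A u * B 0 ∧
    theta1 τ u ^ 2 = A u * B 0 - B u * A 0 := by
  refine ⟨fun u => jacobiTheta₂ (2 * u) (2 * τ), fun u =>
    Complex.exp (Real.pi * Complex.I * τ / 2 + 2 * Real.pi * Complex.I * u) *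
      jacobiTheta₂ (2 * u + τ) (2 * τ), fun u => ?_⟩
  have p1 := jacobiTheta₂_add_left (2 * u) (2 * τ)
  have p2 := jacobiTheta₂_add_left (2 * u + τ) (2 * τ)
  have p3 := jacobiTheta₂_add_left (2 * u + 2 * τ) (2 * τ)
  have p4 := big_per u τ
  set s := Complex.exp (Real.pi * Complex.I * τ / 4) with hs
  set t := Complex.exp (Real.pi * Complex.I * u) with ht
  have hs0 : s ≠ 0 := Complex.exp_ne_zero _
  have ht0 : t ≠ 0 := Complex.exp_ne_zero _
  have E1 : Complex.exp (Real.pi * Complex.I * τ / 2 + 2 * Real.pi * Complex.I * u)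
      = s ^ 2 * t ^ 2 := by
    rw [hs, ht, ← Complex.exp_nat_mul, ← Complex.exp_nat_mul, ← Complex.exp_add]
    congr 1; push_cast; ring
  have E0 : Complex.exp (Real.pi * Complex.I * τ / 2)
      = s ^ 2 := by
    rw [hs, ← Complex.exp_nat_mul]
    congr 1; push_cast; ring
  have E2 : Complex.exp (-(2 * Real.pi * Complex.I * τ + 4 * Real.pi * Complex.I * u))
      = (s ^ 8 * t ^ 4)⁻¹ := by
    rw [hs, ht, ← Complex.exp_nat_mul, ← Complex.exp_nat_mul, ← Complex.exp_add, ← Complex.exp_neg]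
    congr 1; push_cast; ring
  have F3 : Complex.exp (2 * Real.pi * Complex.I * u + Real.pi * Complex.I * τ)
      = s ^ 4 * t ^ 2 := by
    rw [hs, ht, ← Complex.exp_nat_mul, ← Complex.exp_nat_mul, ← Complex.exp_add]
    congr 1; push_cast; ring
  have F4 : Complex.exp (2 * Real.pi * Complex.I * (u + 1 / 2) + Real.pi * Complex.I * τ)
      = - (s ^ 4 * t ^ 2) := by
    rw [← F3, ← neg_one_mul, ← Complex.exp_pi_mul_I, ← Complex.exp_add]
    congr 1; ring
  have F2 : Complex.exp (2 * Real.pi * Complex.I * (u + τ / 2) + Real.pi * Complex.I * τ)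
      = s ^ 8 * t ^ 2 := by
    rw [hs, ht, ← Complex.exp_nat_mul, ← Complex.exp_nat_mul, ← Complex.exp_add]
    congr 1; push_cast; ring
  have F1 : Complex.exp (2 * Real.pi * Complex.I * (u + 1 / 2 + τ / 2) + Real.pi * Complex.I * τ)
      = - (s ^ 8 * t ^ 2) := by
    rw [← F2, ← neg_one_mul, ← Complex.exp_pi_mul_I, ← Complex.exp_add]
    congr 1; ring
  have m3 := theta_mul u u τ hτ
  have m4 := theta_mul (u + 1 / 2) (u + 1 / 2) τ hτ
  have m2 := theta_mul (u + τ / 2) (u + τ / 2) τ hτ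
  have m1 := theta_mul (u + 1 / 2 + τ / 2) (u + 1 / 2 + τ / 2) τ hτ
  rw [F3, sub_self, zero_add, ← two_mul] at m3
  rw [F4, sub_self, zero_add, show u + 1 / 2 + (u + 1 / 2) = 2 * u + 1 by ring,
    show 2 * u + 1 + τ = 2 * u + τ + 1 by ring, p1, p2] at m4
  rw [F2, sub_self, zero_add, show u + τ / 2 + (u + τ / 2) = 2 * u + τ by ring,
    show 2 * u + τ + τ = 2 * u + 2 * τ by ring, p4, E2] at m2
  rw [F1, sub_self, zero_add, show u + 1 / 2 + τ / 2 + (u + 1 / 2 + τ / 2) = 2 * u + τ + 1 by ring,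
    show 2 * u + τ + 1 + τ = 2 * u + 2 * τ + 1 by ring, p2, p3, p4, E2] at m1
  simp only [theta1, theta2, theta3, theta4, E1, E0, mul_zero, zero_add, add_zero]
  rw [← hs, ← ht]
  refine ⟨?_, ?_, ?_, ?_⟩
  · linear_combination m3
  · linear_combination m4
  · rw [mul_pow, sq (jacobiTheta₂ _ _), m2]
    field_simp
    try ring
  · rw [mul_pow, sq (jacobiTheta₂ _ _), m1, mul_pow, mul_pow, neg_sq, Complex.I_sq]
    field_simp
    try ring

/-- The theta-parametrized point `(Z₀,Z₁,Z₂,Z₃)` lies on the biquadratic curve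
`(Z₀²−Z₁²)/a = (Z₀²−Z₂²)/b = (Z₀²−Z₃²)/c` with `a = θ₂(0)²/θ₂(η)²`,
`b = θ₃(0)²/θ₃(η)²`, `c = θ₄(0)²/θ₄(η)²`. -/
theorem stmt_16 (τ : ℂ) (hτ : 0 < τ.im) (η z : ℂ)
    (h1 : theta1 τ η ≠ 0) (h2 : theta2 τ η ≠ 0)
    (h3 : theta3 τ η ≠ 0) (h4 : theta4 τ η ≠ 0)
    (Z0 Z1 Z2 Z3 : ℂ)
    (hZ0 : Z0 = theta1 τ (2 * z) / theta1 τ η)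
    (hZ1 : Z1 = theta2 τ (2 * z) / theta2 τ η)
    (hZ2 : Z2 = theta3 τ (2 * z) / theta3 τ η)
    (hZ3 : Z3 = theta4 τ (2 * z) / theta4 τ η) :
    (theta2 τ η) ^ 2 / (theta2 τ 0) ^ 2 * (Z0 ^ 2 - Z1 ^ 2)
        = (theta3 τ η) ^ 2 / (theta3 τ 0) ^ 2 * (Z0 ^ 2 - Z2 ^ 2) ∧
    (theta3 τ η) ^ 2 / (theta3 τ 0) ^ 2 * (Z0 ^ 2 - Z2 ^ 2)
        = (theta4 τ η) ^ 2 / (theta4 τ 0) ^ 2 * (Z0 ^ 2 - Z3 ^ 2) := by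
  obtain ⟨A, B, hAB⟩ := theta_squares τ hτ
  have n2 : theta2 τ 0 ^ 2 ≠ 0 := by
    simp only [theta2, zero_add]
    exact pow_ne_zero 2 (mul_ne_zero (mul_ne_zero (Complex.exp_ne_zero _) (Complex.exp_ne_zero _))
      (theta2_ne τ hτ))
  have n3 : theta3 τ 0 ^ 2 ≠ 0 := pow_ne_zero 2 (theta3_ne τ hτ)
  have n4 : theta4 τ 0 ^ 2 ≠ 0 := by
    simp only [theta4, zero_add]
    exact pow_ne_zero 2 (theta4_ne τ hτ)
  have n2' : theta2 τ 0 ≠ 0 := fun h => n2 (by rw [h]; simp)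
  have n3' : theta3 τ 0 ≠ 0 := fun h => n3 (by rw [h]; simp)
  have n4' : theta4 τ 0 ≠ 0 := fun h => n4 (by rw [h]; simp)
  have k1 := pow_ne_zero 2 h1
  have k2 := pow_ne_zero 2 h2
  have k3 := pow_ne_zero 2 h3
  have k4 := pow_ne_zero 2 h4
  obtain ⟨a3, a4, a2, a1⟩ := hAB 0
  obtain ⟨b3, b4, b2, b1⟩ := hAB η
  obtain ⟨c3, c4, c2, c1⟩ := hAB (2 * z)
  subst hZ0 hZ1 hZ2 hZ3
  simp only [div_pow]
  have r2 : theta2 τ η ^ 2 / theta2 τ 0 ^ 2 * (theta1 τ (2 * z) ^ 2 / theta1 τ η ^ 2 -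
      theta2 τ (2 * z) ^ 2 / theta2 τ η ^ 2) =
      (A (2 * z) * B η - A η * B (2 * z)) / theta1 τ η ^ 2 := by
    field_simp
    rw [a2, b2, b1, c2, c1]
    ring
  have r3 : theta3 τ η ^ 2 / theta3 τ 0 ^ 2 * (theta1 τ (2 * z) ^ 2 / theta1 τ η ^ 2 -
      theta3 τ (2 * z) ^ 2 / theta3 τ η ^ 2) =
      (A (2 * z) * B η - A η * B (2 * z)) / theta1 τ η ^ 2 := by
    field_simp
    rw [a3, b3, b1, c3, c1]
    ring
  have r4 : theta4 τ η ^ 2 / theta4 τ 0 ^ 2 * (theta1 τ (2 * z) ^ 2 / theta1 τ η ^ 2 -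
      theta4 τ (2 * z) ^ 2 / theta4 τ η ^ 2) =
      (A (2 * z) * B η - A η * B (2 * z)) / theta1 τ η ^ 2 := by
    field_simp
    rw [a4, b4, b1, c4, c1]
    ring
  rw [r2, r3, r4]
  exact ⟨rfl, rfl⟩
end

section
/- Let τ ∈ ℂ with Im τ > 0 and define the Jacobi theta functions θ₁, θ₂, θ₃, θ₄ (with parameter τ) as in the context. Then for every η ∈ ℂ the following three identities hold: θ₃(0)²·θ₂(0)·θ₂(2η) + θ₂(0)²·θ₃(0)·θ₃(2η) = 2·θ₂(η)²·θ₃(η)²; θ₄(0)²·θ₃(0)·θ₃(2η) + θ₃(0)²·θ₄(0)·θ₄(2η) = 2·θ₃(η)²·θ₄(η)²; and θ₂(0)²·θ₄(0)·θ₄(2η) + θ₄(0)²·θ₂(0)·θ₂(2η) = 2·θ₂(η)²·θ₄(η)². (Equivalently, with j_k = θ_{k+1}(0)θ_{k+1}(2η)/θ_{k+1}(η)² and ĵ_k = θ_{k+1}(0)²/θ_{k+1}(η)² for k = 1,2,3, one has j_k ĵ_ℓ + ĵ_k j_ℓ = 2 for all k ≠ ℓ.) -/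
open Complex in
lemma aux_prod (τ : ℂ) (hτ : 0 < τ.im) (x y : ℂ) :
    jacobiTheta₂ x τ * jacobiTheta₂ y τ =
      jacobiTheta₂ (x + y) (2 * τ) * jacobiTheta₂ (x - y) (2 * τ)
      + cexp (Real.pi * I * τ) * cexp (Real.pi * I * x) ^ 2 *
        (jacobiTheta₂ (x + y + τ) (2 * τ) * jacobiTheta₂ (x - y + τ) (2 * τ)) := by
  have h2 : 0 < (2 * τ).im := by simpa using hτ
  have key : ∀ (a b : ℂ) {t : ℂ}, 0 < t.im → HasSum (fun p : ℤ × ℤ =>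
      jacobiTheta₂_term p.1 a t * jacobiTheta₂_term p.2 b t)
      (jacobiTheta₂ a t * jacobiTheta₂ b t) := by
    intro a b t ht
    have ha := (summable_jacobiTheta₂_term_iff a t).2 ht
    have hb := (summable_jacobiTheta₂_term_iff b t).2 ht
    have hs : Summable (fun p : ℤ × ℤ => jacobiTheta₂_term p.1 a t * jacobiTheta₂_term p.2 b t) :=
      summable_mul_of_summable_norm (f := fun n : ℤ => jacobiTheta₂_term n a t)
        (g := fun n : ℤ => jacobiTheta₂_term n b t) ha.norm hb.norm
    have he : jacobiTheta₂ a t * jacobiTheta₂ b t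
        = ∑' p : ℤ × ℤ, jacobiTheta₂_term p.1 a t * jacobiTheta₂_term p.2 b t :=
      tsum_mul_tsum_of_summable_norm (f := fun n : ℤ => jacobiTheta₂_term n a t)
        (g := fun n : ℤ => jacobiTheta₂_term n b t) ha.norm hb.norm
    rw [he]
    exact hs.hasSum
  let e : (ℤ × ℤ) ⊕ (ℤ × ℤ) → ℤ × ℤ :=
    Sum.elim (fun p => (p.1 + p.2, p.1 - p.2)) (fun p => (p.1 + p.2 + 1, p.1 - p.2))
  have he : Function.Bijective e := by
    constructor
    · rintro (⟨a, b⟩ | ⟨a, b⟩) (⟨c, d⟩ | ⟨c, d⟩) h <;>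
        simp only [e, Sum.elim_inl, Sum.elim_inr, Prod.mk.injEq] at h
      · have h1 : a = c := by omega
        have h2 : b = d := by omega
        rw [h1, h2]
      · omega
      · omega
      · have h1 : a = c := by omega
        have h2 : b = d := by omega
        rw [h1, h2]
    · rintro ⟨n, m⟩
      rcases Int.emod_two_eq_zero_or_one (n + m) with h | h
      · refine ⟨Sum.inl ((n + m) / 2, (n - m) / 2), ?_⟩
        simp only [e, Sum.elim_inl, Prod.mk.injEq]
        omega
      · refine ⟨Sum.inr ((n + m) / 2, (n - m) / 2), ?_⟩
        simp only [e, Sum.elim_inr, Prod.mk.injEq]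
        omega
  have h3 := (Equiv.ofBijective e he).hasSum_iff.2 (key x y hτ)
  have h4 := HasSum.sum (f := (fun p : ℤ × ℤ =>
      jacobiTheta₂_term p.1 x τ * jacobiTheta₂_term p.2 y τ) ∘ (Equiv.ofBijective e he))
    (a := jacobiTheta₂ (x + y) (2 * τ) * jacobiTheta₂ (x - y) (2 * τ))
    (b := cexp (Real.pi * I * τ) * cexp (Real.pi * I * x) ^ 2 *
        (jacobiTheta₂ (x + y + τ) (2 * τ) * jacobiTheta₂ (x - y + τ) (2 * τ))) ?_ ?_
  · exact h3.unique h4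
  · convert key (x + y) (x - y) h2 using 1
    funext ⟨r, s⟩
    simp only [Function.comp, Equiv.ofBijective_apply, e, Sum.elim_inl, jacobiTheta₂_term,
      ← Complex.exp_add]
    congr 1
    push_cast
    ring
  · have hm : HasSum (fun p : ℤ × ℤ => (cexp (Real.pi * I * τ) * cexp (Real.pi * I * x) ^ 2) *
        (jacobiTheta₂_term p.1 (x + y + τ) (2 * τ) * jacobiTheta₂_term p.2 (x - y + τ) (2 * τ)))
        (cexp (Real.pi * I * τ) * cexp (Real.pi * I * x) ^ 2 *
        (jacobiTheta₂ (x + y + τ) (2 * τ) * jacobiTheta₂ (x - y + τ) (2 * τ))) :=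
      (key (x + y + τ) (x - y + τ) h2).mul_left _
    convert hm using 1
    funext ⟨r, s⟩
    simp only [Function.comp, Equiv.ofBijective_apply, e, Sum.elim_inr, jacobiTheta₂_term,
      ← Complex.exp_add, ← Complex.exp_nat_mul]
    congr 1
    push_cast
    ring

open Complex in
lemma aux_id2 (τ : ℂ) (hτ : 0 < τ.im) (η : ℂ) :
    (theta4 τ 0) ^ 2 * theta3 τ 0 * theta3 τ (2 * η)
        + (theta3 τ 0) ^ 2 * theta4 τ 0 * theta4 τ (2 * η)
      = 2 * (theta3 τ η) ^ 2 * (theta4 τ η) ^ 2 := by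
  have hz : jacobiTheta₂ (-(1 / 2) + τ) (2 * τ) = 0 := by
    have h1 := jacobiTheta₂_add_left' (-(1 / 2) - τ) (2 * τ)
    have h2 := jacobiTheta₂_add_left (-(1 / 2) - τ) (2 * τ)
    have h3 := jacobiTheta₂_neg_left (-(1 / 2) + τ) (2 * τ)
    rw [show -(1 / 2) - τ + 2 * τ = -(1 / 2) + τ by ring,
      show -(Real.pi : ℂ) * I * (2 * τ + 2 * (-(1 / 2) - τ)) = Real.pi * I by ring,
      Complex.exp_pi_mul_I] at h1
    rw [show -(1 / 2) - τ + 1 = -(-(1 / 2) + τ) by ring, h3] at h2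
    rw [← h2] at h1
    linear_combination h1 / 2
  have hd : ∀ w : ℂ, jacobiTheta₂ w τ * jacobiTheta₂ (w + 1 / 2) τ =
      jacobiTheta₂ (2 * w + 1 / 2) (2 * τ) * jacobiTheta₂ (1 / 2) (2 * τ) := by
    intro w
    rw [aux_prod τ hτ, show w - (w + 1 / 2) = -(1 / 2) by ring, hz, jacobiTheta₂_neg_left,
      show w + (w + 1 / 2) = 2 * w + 1 / 2 by ring]
    ring
  have e1 := hd η
  have e0 := hd 0
  have a1 := aux_prod τ hτ (2 * η) (1 / 2)
  have a2 := aux_prod τ hτ (2 * η + 1 / 2) 0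
  have p1 := jacobiTheta₂_add_left (2 * η - 1 / 2) (2 * τ)
  have p2 := jacobiTheta₂_add_left (2 * η - 1 / 2 + τ) (2 * τ)
  rw [show 2 * η - 1 / 2 + 1 = 2 * η + 1 / 2 by ring] at p1
  rw [show 2 * η - 1 / 2 + τ + 1 = 2 * η + 1 / 2 + τ by ring] at p2
  rw [← p1, ← p2] at a1
  have hh : cexp (Real.pi * I * (2 * η + 1 / 2)) ^ 2 = - cexp (Real.pi * I * (2 * η)) ^ 2 := by
    rw [← Complex.exp_nat_mul, ← Complex.exp_nat_mul, ← mul_neg_one, ← Complex.exp_pi_mul_I,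
      ← Complex.exp_add]
    congr 1
    push_cast
    ring
  rw [hh] at a2
  simp only [add_zero, sub_zero, mul_zero, zero_add] at a2 e0
  simp only [theta3, theta4, zero_add]
  set A := jacobiTheta₂ (2 * η + 1 / 2) (2 * τ)
  set B := jacobiTheta₂ (1 / 2) (2 * τ)
  calc _ = (jacobiTheta₂ 0 τ * jacobiTheta₂ (1 / 2) τ) *
        (jacobiTheta₂ (2 * η) τ * jacobiTheta₂ (1 / 2) τ
          + jacobiTheta₂ (2 * η + 1 / 2) τ * jacobiTheta₂ 0 τ) := by ring
    _ = 2 * (A * B) ^ 2 := by rw [e0, a1, a2]; ring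
    _ = _ := by rw [← e1]; ring

open Complex in
lemma aux_id1 (τ : ℂ) (hτ : 0 < τ.im) (η : ℂ) :
    (theta3 τ 0) ^ 2 * theta2 τ 0 * theta2 τ (2 * η)
        + (theta2 τ 0) ^ 2 * theta3 τ 0 * theta3 τ (2 * η)
      = 2 * (theta2 τ η) ^ 2 * (theta3 τ η) ^ 2 := by
  have hd : ∀ w : ℂ, jacobiTheta₂ w τ * jacobiTheta₂ (w + τ / 2) τ =
      jacobiTheta₂ (τ / 2) (2 * τ) * (jacobiTheta₂ (2 * w + τ / 2) (2 * τ) +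
       cexp (Real.pi * I * τ) * cexp (Real.pi * I * w) ^ 2 *
         jacobiTheta₂ (2 * w + τ / 2 + τ) (2 * τ)) := by
    intro w
    rw [aux_prod τ hτ, show w - (w + τ / 2) = -(τ / 2) by ring, jacobiTheta₂_neg_left,
      show w + (w + τ / 2) = 2 * w + τ / 2 by ring, show -(τ / 2) + τ = τ / 2 by ring]
    ring
  have e1 := hd η
  have e0 := hd 0
  have a1 := aux_prod τ hτ (2 * η) (τ / 2)
  have a2 := aux_prod τ hτ (2 * η + τ / 2) 0
  have q0 := jacobiTheta₂_add_left' (-(τ / 2)) (2 * τ)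
  have q1 := jacobiTheta₂_add_left' (2 * η - τ / 2) (2 * τ)
  rw [show -(τ / 2) + 2 * τ = τ / 2 + τ by ring, jacobiTheta₂_neg_left,
    show -(Real.pi : ℂ) * I * (2 * τ + 2 * (-(τ / 2))) = -(Real.pi * I * τ) by ring,
    Complex.exp_neg] at q0
  rw [show 2 * η - τ / 2 + 2 * τ = 2 * η + τ / 2 + τ by ring,
    show -(Real.pi : ℂ) * I * (2 * τ + 2 * (2 * η - τ / 2))
      = -(Real.pi * I * τ + (4 : ℕ) * (Real.pi * I * η)) by push_cast; ring,
    Complex.exp_neg, Complex.exp_add, Complex.exp_nat_mul] at q1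
  rw [show 2 * η - τ / 2 + τ = 2 * η + τ / 2 by ring] at a1
  have x1 : cexp (Real.pi * I * (2 * η)) = cexp (Real.pi * I * η) ^ 2 := by
    rw [← Complex.exp_nat_mul]; congr 1; push_cast; ring
  have x2 : cexp (Real.pi * I * (2 * η + τ / 2)) ^ 2
      = cexp (Real.pi * I * η) ^ 4 * cexp (Real.pi * I * τ) := by
    rw [← Complex.exp_nat_mul, ← Complex.exp_nat_mul, ← Complex.exp_add]
    congr 1; push_cast; ring
  rw [x1] at a1
  rw [x2] at a2
  simp only [add_zero, sub_zero, mul_zero, zero_add, Complex.exp_zero, one_pow, mul_one] at a2 e0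
  simp only [theta3, theta2, zero_add, x1, mul_zero, Complex.exp_zero, mul_one]
  have hQ : cexp (Real.pi * I * τ) ≠ 0 := Complex.exp_ne_zero _
  have hE : cexp (Real.pi * I * η) ≠ 0 := Complex.exp_ne_zero _
  set Q := cexp (Real.pi * I * τ)
  set E := cexp (Real.pi * I * η)
  set R := cexp (Real.pi * I * τ / 4)
  set a := jacobiTheta₂ (2 * η + τ / 2) (2 * τ)
  set b := jacobiTheta₂ (2 * η + τ / 2 + τ) (2 * τ)
  set c := jacobiTheta₂ (2 * η - τ / 2) (2 * τ)
  set k := jacobiTheta₂ (τ / 2) (2 * τ)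
  have hc : c = Q * E ^ 4 * b := by rw [q1]; field_simp
  rw [q0] at e0
  have e0' : jacobiTheta₂ 0 τ * jacobiTheta₂ (τ / 2) τ = 2 * k ^ 2 := by
    rw [e0]; field_simp; ring
  calc _ = R ^ 2 * (jacobiTheta₂ 0 τ * jacobiTheta₂ (τ / 2) τ) *
        (E ^ 2 * (jacobiTheta₂ (2 * η + τ / 2) τ * jacobiTheta₂ 0 τ)
          + jacobiTheta₂ (2 * η) τ * jacobiTheta₂ (τ / 2) τ) := by ring
    _ = 2 * R ^ 2 * E ^ 2 * (k * (a + Q * E ^ 2 * b)) ^ 2 := by rw [e0', a1, a2, hc]; ring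
    _ = _ := by rw [← e1]; ring

open Complex in
lemma aux_shift (τ z : ℂ) : jacobiTheta₂ z (τ + 1) = jacobiTheta₂ (z + 1 / 2) τ := by
  refine tsum_congr (fun n ↦ ?_)
  obtain ⟨m, hm⟩ : Even (n * (n - 1)) := Int.even_mul_pred_self n
  have hm' : (n : ℂ) * (n - 1) = m + m := by exact_mod_cast hm
  simp only [jacobiTheta₂_term]
  rw [Complex.exp_eq_exp_iff_exists_int]
  refine ⟨m, ?_⟩
  linear_combination (Real.pi * I) * hm'

open Complex in
lemma aux_id3 (τ : ℂ) (hτ : 0 < τ.im) (η : ℂ) :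
    (theta2 τ 0) ^ 2 * theta4 τ 0 * theta4 τ (2 * η)
        + (theta4 τ 0) ^ 2 * theta2 τ 0 * theta2 τ (2 * η)
      = 2 * (theta2 τ η) ^ 2 * (theta4 τ η) ^ 2 := by
  have h := aux_id1 (τ + 1) (by simpa using hτ) η
  have h3 : ∀ z, theta3 (τ + 1) z = theta4 τ z := fun z => aux_shift τ z
  have h2 : ∀ z, theta2 (τ + 1) z = cexp (Real.pi * I / 4) * theta2 τ z := by
    intro z
    simp only [theta2]
    rw [aux_shift, show z + (τ + 1) / 2 + 1 / 2 = z + τ / 2 + 1 by ring, jacobiTheta₂_add_left,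
      show (Real.pi : ℂ) * I * (τ + 1) / 4 = Real.pi * I / 4 + Real.pi * I * τ / 4 by ring,
      Complex.exp_add]
    ring
  simp only [h3, h2] at h
  have hne : cexp (Real.pi * I / 4) ^ 2 ≠ 0 := pow_ne_zero _ (Complex.exp_ne_zero _)
  apply mul_left_cancel₀ hne
  linear_combination h

/-- The three duplication identities `j_k ĵ_ℓ + ĵ_k j_ℓ = 2` in cleared form. -/
theorem stmt_17 (τ : ℂ) (hτ : 0 < τ.im) (η : ℂ) :
    (theta3 τ 0) ^ 2 * theta2 τ 0 * theta2 τ (2 * η)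
        + (theta2 τ 0) ^ 2 * theta3 τ 0 * theta3 τ (2 * η)
      = 2 * (theta2 τ η) ^ 2 * (theta3 τ η) ^ 2 ∧
    (theta4 τ 0) ^ 2 * theta3 τ 0 * theta3 τ (2 * η)
        + (theta3 τ 0) ^ 2 * theta4 τ 0 * theta4 τ (2 * η)
      = 2 * (theta3 τ η) ^ 2 * (theta4 τ η) ^ 2 ∧
    (theta2 τ 0) ^ 2 * theta4 τ 0 * theta4 τ (2 * η)
        + (theta4 τ 0) ^ 2 * theta2 τ 0 * theta2 τ (2 * η)
      = 2 * (theta2 τ η) ^ 2 * (theta4 τ η) ^ 2 := by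
  exact ⟨aux_id1 τ hτ η, aux_id2 τ hτ η, aux_id3 τ hτ η⟩
end

section
/- Let φ₁, φ₂, φ₃ be real numbers with cos φ_k ≠ 0 for k = 1,2,3, and set φ₀ = 0, t_k = tan φ_k, s₀ = 0, s_k = 1 + t_ℓ t_m for each cyclic permutation (k,ℓ,m) of (1,2,3), and n₀ = 0, n₁ = n₂ = n₃ = 1. Then for every permutation (α,β,γ,δ) of (0,1,2,3): cos(φ_α − φ_β + φ_γ − φ_δ) = (n_α − n_β + n_γ − n_δ)·(s_α − s_β + s_γ − s_δ)·cos φ₁ · cos φ₂ · cos φ₃. -/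
/-- `(φ₀, φ₁, φ₂, φ₃)` with `φ₀ = 0`. -/
noncomputable def phiVec (φ1 φ2 φ3 : ℝ) : Fin 4 → ℝ := ![0, φ1, φ2, φ3]

/-- `(s₀, s₁, s₂, s₃)` with `s₀ = 0` and `s_k = 1 + tan φ_ℓ tan φ_m`. -/
noncomputable def sVec (φ1 φ2 φ3 : ℝ) : Fin 4 → ℝ :=
  ![0, 1 + Real.tan φ2 * Real.tan φ3, 1 + Real.tan φ3 * Real.tan φ1,
    1 + Real.tan φ1 * Real.tan φ2]

/-- `(n₀, n₁, n₂, n₃) = (0, 1, 1, 1)`. -/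
def nVec : Fin 4 → ℝ := ![0, 1, 1, 1]

/-- For every permutation `(α,β,γ,δ)` of `(0,1,2,3)`:
`cos(φ_α − φ_β + φ_γ − φ_δ) = (n_α − n_β + n_γ − n_δ)(s_α − s_β + s_γ − s_δ) ∏ cos φ_k`. -/
theorem stmt_18 (φ1 φ2 φ3 : ℝ)
    (h1 : Real.cos φ1 ≠ 0) (h2 : Real.cos φ2 ≠ 0) (h3 : Real.cos φ3 ≠ 0) :
    ∀ e : Equiv.Perm (Fin 4),
      Real.cos (phiVec φ1 φ2 φ3 (e 0) - phiVec φ1 φ2 φ3 (e 1)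
          + phiVec φ1 φ2 φ3 (e 2) - phiVec φ1 φ2 φ3 (e 3))
        = (nVec (e 0) - nVec (e 1) + nVec (e 2) - nVec (e 3))
          * (sVec φ1 φ2 φ3 (e 0) - sVec φ1 φ2 φ3 (e 1)
              + sVec φ1 φ2 φ3 (e 2) - sVec φ1 φ2 φ3 (e 3))
          * (Real.cos φ1 * Real.cos φ2 * Real.cos φ3) := by
  intro e
  have h01 : e 0 ≠ e 1 := fun h => absurd (e.injective h) (by decide)
  have h02 : e 0 ≠ e 2 := fun h => absurd (e.injective h) (by decide)
  have h03 : e 0 ≠ e 3 := fun h => absurd (e.injective h) (by decide)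
  have h12 : e 1 ≠ e 2 := fun h => absurd (e.injective h) (by decide)
  have h13 : e 1 ≠ e 3 := fun h => absurd (e.injective h) (by decide)
  have h23 : e 2 ≠ e 3 := fun h => absurd (e.injective h) (by decide)
  generalize e 0 = a at *
  generalize e 1 = b at *
  generalize e 2 = c at *
  generalize e 3 = d at *
  fin_cases a <;> fin_cases b <;> first | exact absurd rfl h01 | skip
  all_goals fin_cases c <;> first | exact absurd rfl h02 | exact absurd rfl h12 | skip
  all_goals fin_cases d <;>
    first | exact absurd rfl h03 | exact absurd rfl h13 | exact absurd rfl h23 | skip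
  all_goals
    clear h01 h02 h03 h12 h13 h23
    simp [phiVec, sVec, nVec, Real.tan_eq_sin_div_cos, Real.cos_add, Real.cos_sub,
      Real.sin_add, Real.sin_sub]
    field_simp
    ring
end
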